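/- arXiv:1205.3878 — 5 statements merged into one kernel-verified Lean document; each statement's English description precedes it below -/
import Mathlib

section
/- Let C be a binary code of length 16 with exactly 256 codewords and minimum distance 6, and let μ : Aut(C) → S_16 be the homomorphism sending the automorphism x ↦ (x ∘ σ⁻¹) + v to the coordinate permutation σ. Then the image μ(Aut(C)) is isomorphic as a group to the affine group AGL(4,2) of the vector space F_2^4 (the group of all maps y ↦ A·y + b with A ∈ GL(4,2) and b ∈ F_2^4, a group of order 322560, isomorphic to 2^4:A_8). -/
open Set

/-- Distance from a vertex to a code in the binary Hamming space. -/
noncomputable def distToCode {m : ℕ} (C : Set (Fin m → ZMod 2)) (x : Fin m → ZMod 2) : ℕ :=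
  sInf {d | ∃ c ∈ C, hammingDist x c = d}

/-- `C` has minimum distance `δ`. -/
def IsMinDist {m : ℕ} (C : Set (Fin m → ZMod 2)) (δ : ℕ) : Prop :=
  (∀ x ∈ C, ∀ y ∈ C, x ≠ y → δ ≤ hammingDist x y) ∧
  ∃ x ∈ C, ∃ y ∈ C, x ≠ y ∧ hammingDist x y = δ

/-- `C` is completely regular: the number of codewords at distance `k` from `γ`
depends only on `distToCode C γ` and `k`. -/
def IsCompletelyRegular {m : ℕ} (C : Set (Fin m → ZMod 2)) : Prop :=
  ∀ γ γ' : Fin m → ZMod 2, distToCode C γ = distToCode C γ' →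
    ∀ k : ℕ, {c ∈ C | hammingDist γ c = k}.ncard = {c ∈ C | hammingDist γ' c = k}.ncard

namespace NRCode

set_option linter.unusedSectionVars false
/-- sign character -/
def sg (a : ZMod 2) : ℤ := if a = 0 then 1 else -1

lemma sg_sq (a : ZMod 2) : sg a * sg a = 1 := by revert a; decide
lemma sg_add (a b : ZMod 2) : sg (a + b) = sg a * sg b := by revert a b; decide
lemma sg_mul_eq (a b : ZMod 2) : sg a * sg b = 1 - 2 * (if a ≠ b then 1 else 0) := by
  revert a b; decide
lemma sg_mul_eq' (a b : ZMod 2) : sg a * sg b = if a ≠ b then -1 else 1 := by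
  revert a b; decide

section LP
variable {ι : Type*} [Fintype ι] [DecidableEq ι]

/-- inner product of sign vectors -/
def ip (x y : ι → ZMod 2) : ℤ := ∑ i, sg (x i) * sg (y i)

lemma ip_eq (x y : ι → ZMod 2) : ip x y = Fintype.card ι - 2 * hammingDist x y := by
  unfold ip hammingDist
  simp_rw [sg_mul_eq, Finset.sum_sub_distrib, ← Finset.mul_sum, Finset.sum_boole]
  simp

lemma prod_eq (x y : ι → ZMod 2) : ∏ i, (sg (x i) * sg (y i)) = (-1) ^ hammingDist x y := by
  unfold hammingDist
  simp_rw [sg_mul_eq', Finset.prod_ite]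
  simp

/-- elementary symmetric sums -/
def es (k : ℕ) (z : ι → ℤ) : ℤ := ∑ S ∈ Finset.powersetCard k Finset.univ, ∏ i ∈ S, z i

lemma es_newton (k : ℕ) (z : ι → ℤ) : (k : ℤ) * es k z = (-1) ^ (k + 1) *
    ∑ a ∈ (Finset.HasAntidiagonal.antidiagonal k).filter (fun a => a.1 < k), (-1) ^ a.1 * es a.1 z * ∑ i, z i ^ a.2 := by
  have h := congrArg (MvPolynomial.aeval z) (MvPolynomial.mul_esymm_eq_sum ι ℤ k)
  simpa [MvPolynomial.esymm, MvPolynomial.psum, es] using h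

lemma es_vals (z : ι → ℤ) (hz : ∀ i, z i * z i = 1) (h16 : Fintype.card ι = 16) :
    es 0 z = 1 ∧ es 1 z = ∑ i, z i ∧ 2 * es 2 z = (∑ i, z i) ^ 2 - 16 ∧
    3 * es 3 z = es 2 z * (∑ i, z i) - 15 * (∑ i, z i) ∧
    4 * es 4 z = es 3 z * (∑ i, z i) - 16 * es 2 z + (∑ i, z i) ^ 2 - 16 := by
  have p2 : ∑ i, z i ^ 2 = 16 := by simp [pow_two, hz, h16]
  have p3 : ∑ i, z i ^ 3 = ∑ i, z i := by
    refine Finset.sum_congr rfl fun i _ => ?_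
    linear_combination z i * hz i
  have p4 : ∑ i, z i ^ 4 = 16 := by
    have : ∀ i, z i ^ 4 = 1 := fun i => by linear_combination (z i * z i + 1) * hz i
    simp [this, h16]
  have h0 : es 0 z = 1 := by simp [es]
  have f1 : (Finset.HasAntidiagonal.antidiagonal 1).filter (fun a => a.1 < 1) = {(0,1)} := by decide
  have f2 : (Finset.HasAntidiagonal.antidiagonal 2).filter (fun a => a.1 < 2) = {(0,2),(1,1)} := by decide
  have f3 : (Finset.HasAntidiagonal.antidiagonal 3).filter (fun a => a.1 < 3) = {(0,3),(1,2),(2,1)} := by decide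
  have f4 : (Finset.HasAntidiagonal.antidiagonal 4).filter (fun a => a.1 < 4) = {(0,4),(1,3),(2,2),(3,1)} := by
    decide
  have n1 := es_newton 1 z
  have n2 := es_newton 2 z
  have n3 := es_newton 3 z
  have n4 := es_newton 4 z
  rw [f1] at n1
  rw [f2] at n2
  rw [f3] at n3
  rw [f4] at n4
  simp [h0] at n1
  simp [h0, p2, n1] at n2
  simp [h0, p2, p3, n1] at n3
  simp [h0, p2, p3, p4, n1] at n4
  refine ⟨h0, n1, ?_, ?_, ?_⟩ <;> linarith

/-- the Delsarte certificate -/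
lemma cert (x y : ι → ZMod 2) (h16 : Fintype.card ι = 16) (hd : x ≠ y → 6 ≤ hammingDist x y)
    (z : ι → ℤ) (hz : z = fun i => sg (x i) * sg (y i)) (f : ℤ)
    (hf : f = 480 + 480 * es 1 z + 144 * es 2 z + 80 * es 3 z + 12 * es 4 z
      + (∏ i, z i) * (16 * es 3 z + 12 * es 4 z)) :
    (x = y → f = 122880) ∧ (x ≠ y → f ≤ 0 ∧ (f = 0 → hammingDist x y = 6 ∨ hammingDist x y = 8 ∨
      hammingDist x y = 10 ∨ hammingDist x y = 16)) := by
  have hzz : ∀ i, z i * z i = 1 := by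
    intro i; rw [hz]; linear_combination sg (y i) * sg (y i) * sg_sq (x i) + sg_sq (y i)
  obtain ⟨h0, h1, h2, h3, h4⟩ := es_vals z hzz h16
  have ht : ∑ i, z i = 16 - 2 * hammingDist x y := by
    have := ip_eq x y
    rw [h16] at this
    rw [hz]; exact_mod_cast this
  have hp : ∏ i, z i = (-1) ^ hammingDist x y := by rw [hz]; exact prod_eq x y
  have hle : hammingDist x y ≤ 16 := h16 ▸ hammingDist_le_card_fintype
  rw [hp] at hf
  rw [ht] at h1 h2 h3 h4
  constructor
  · rintro rfl
    simp at *
    omega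
  · intro hne
    have := hd hne
    generalize hammingDist x y = d at *
    interval_cases d <;> norm_num at * <;> omega
end LP

set_option linter.unusedSectionVars false
section LP2
variable {ι : Type*} [Fintype ι] [DecidableEq ι]

/-- character -/
def chi (S : Finset ι) (x : ι → ZMod 2) : ℤ := ∏ i ∈ S, sg (x i)

lemma es_sum' (C : Finset (ι → ZMod 2)) (k : ℕ) (P : (ι → ZMod 2) → ℤ) :
    ∑ x ∈ C, ∑ y ∈ C, (P x * P y) * es k (fun i => sg (x i) * sg (y i)) =
      ∑ S ∈ Finset.powersetCard k Finset.univ, (∑ x ∈ C, P x * chi S x) ^ 2 := by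
  have h : ∀ x y : ι → ZMod 2, (P x * P y) * es k (fun i => sg (x i) * sg (y i)) =
      ∑ S ∈ Finset.powersetCard k Finset.univ, (P x * chi S x) * (P y * chi S y) := by
    intro x y
    rw [es, Finset.mul_sum]
    refine Finset.sum_congr rfl fun S _ => ?_
    rw [Finset.prod_mul_distrib, chi, chi]; ring
  simp_rw [h, pow_two, Finset.sum_mul_sum]
  calc _ = ∑ x ∈ C, ∑ S ∈ Finset.powersetCard k Finset.univ, ∑ y ∈ C,
        (P x * chi S x) * (P y * chi S y) :=
        Finset.sum_congr rfl fun x _ => Finset.sum_comm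
    _ = _ := Finset.sum_comm

lemma delsarte (C : Finset (ι → ZMod 2)) (h16 : Fintype.card ι = 16) (hC : C.card = 256)
    (hd : ∀ x ∈ C, ∀ y ∈ C, x ≠ y → 6 ≤ hammingDist x y) :
    (∀ x ∈ C, ∀ y ∈ C, x ≠ y → hammingDist x y = 6 ∨ hammingDist x y = 8 ∨
      hammingDist x y = 10 ∨ hammingDist x y = 16) ∧
    ∀ S : Finset ι, 1 ≤ S.card → S.card ≤ 4 → ∑ x ∈ C, chi S x = 0 := by
  let z : (ι → ZMod 2) → (ι → ZMod 2) → ι → ℤ := fun x y i => sg (x i) * sg (y i)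
  let Q : ℕ → ℤ := fun k => ∑ S ∈ Finset.powersetCard k Finset.univ, (∑ x ∈ C, chi S x) ^ 2
  let R : ℕ → ℤ := fun k => ∑ S ∈ Finset.powersetCard k Finset.univ,
    (∑ x ∈ C, chi Finset.univ x * chi S x) ^ 2
  let f : (ι → ZMod 2) → (ι → ZMod 2) → ℤ := fun x y =>
    480 + 480 * es 1 (z x y) + 144 * es 2 (z x y) + 80 * es 3 (z x y) + 12 * es 4 (z x y)
      + (∏ i, z x y i) * (16 * es 3 (z x y) + 12 * es 4 (z x y))
  have hQ : ∀ k, ∑ x ∈ C, ∑ y ∈ C, es k (z x y) = Q k := fun k => by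
    simpa using es_sum' C k (fun _ => 1)
  have hR : ∀ k, ∑ x ∈ C, ∑ y ∈ C, (∏ i, z x y i) * es k (z x y) = R k := fun k => by
    refine Eq.trans ?_ (es_sum' C k (chi Finset.univ))
    simp only [z, Finset.prod_mul_distrib, chi]
  have hQ0 : ∀ k, 0 ≤ Q k := fun k => Finset.sum_nonneg fun S _ => sq_nonneg _
  have hR0 : ∀ k, 0 ≤ R k := fun k => Finset.sum_nonneg fun S _ => sq_nonneg _
  have hT : ∑ x ∈ C, ∑ y ∈ C, f x y = 480 * (256 * 256) + 480 * Q 1 + 144 * Q 2 + 80 * Q 3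
      + 12 * Q 4 + (16 * R 3 + 12 * R 4) := by
    have e : ∀ x y, f x y = 480 + 480 * es 1 (z x y) + 144 * es 2 (z x y) + 80 * es 3 (z x y)
        + 12 * es 4 (z x y) + (16 * ((∏ i, z x y i) * es 3 (z x y)) +
          12 * ((∏ i, z x y i) * es 4 (z x y))) := fun x y => by simp only [f]; ring
    simp_rw [e, Finset.sum_add_distrib, ← Finset.mul_sum, hQ, hR]
    simp [hC]
  have c := fun x (hx : x ∈ C) y (hy : y ∈ C) => cert x y h16 (hd x hx y hy) (z x y) rfl (f x y) rfl
  let g : (ι → ZMod 2) → (ι → ZMod 2) → ℤ := fun x y => (if x = y then 122880 else 0) - f x y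
  have hg : ∀ x ∈ C, ∀ y ∈ C, 0 ≤ g x y := by
    intro x hx y hy
    by_cases h : x = y
    · simp [g, h, (c y hy y hy).1 rfl]
    · simpa [g, h] using ((c x hx y hy).2 h).1
  have hG : ∑ x ∈ C, ∑ y ∈ C, g x y = 256 * 122880 - ∑ x ∈ C, ∑ y ∈ C, f x y := by
    simp only [g, Finset.sum_sub_distrib, Finset.sum_ite_eq]
    congr 1
    rw [Finset.sum_congr rfl (fun x hx => if_pos hx)]
    simp [hC]
  have hG0 : 0 ≤ ∑ x ∈ C, ∑ y ∈ C, g x y :=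
    Finset.sum_nonneg fun x hx => Finset.sum_nonneg fun y hy => hg x hx y hy
  have q1 := hQ0 1
  have q2 := hQ0 2
  have q3 := hQ0 3
  have q4 := hQ0 4
  have r3 := hR0 3
  have r4 := hR0 4
  constructor
  · intro x hx y hy hne
    refine ((c x hx y hy).2 hne).2 ?_
    have h0 : ∑ x ∈ C, ∑ y ∈ C, g x y = 0 := by linarith
    have h1 := (Finset.sum_eq_zero_iff_of_nonneg
      (fun x hx => Finset.sum_nonneg fun y hy => hg x hx y hy)).1 h0 x hx
    have h2 := (Finset.sum_eq_zero_iff_of_nonneg (fun y hy => hg x hx y hy)).1 h1 y hy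
    simpa [g, hne] using h2
  · intro S h1 h4
    have key : Q S.card = 0 := by
      have : S.card = 1 ∨ S.card = 2 ∨ S.card = 3 ∨ S.card = 4 := by omega
      rcases this with h | h | h | h <;> rw [h] <;> linarith
    have := (Finset.sum_eq_zero_iff_of_nonneg (fun S _ => sq_nonneg _)).1 key S
      (by simp [Finset.mem_powersetCard])
    exact pow_eq_zero_iff (two_ne_zero) |>.1 this

lemma mom1 (C : Finset (ι → ZMod 2))
    (hS : ∀ S : Finset ι, 1 ≤ S.card → S.card ≤ 4 → ∑ x ∈ C, chi S x = 0) (a : ι) :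
    ∑ w ∈ C, sg (w a) = 0 := by
  simpa [chi] using hS {a} (by simp) (by simp)

lemma mom2 (C : Finset (ι → ZMod 2)) (hC : C.card = 256)
    (hS : ∀ S : Finset ι, 1 ≤ S.card → S.card ≤ 4 → ∑ x ∈ C, chi S x = 0) (a b : ι) :
    ∑ w ∈ C, sg (w a) * sg (w b) = if a = b then 256 else 0 := by
  split_ifs with h
  · subst h; simp [sg_sq, hC]
  · have := hS {a, b} (by simp) (by simp [Finset.card_pair h])
    simpa [chi, Finset.prod_pair h] using this

lemma mom3 (C : Finset (ι → ZMod 2))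
    (hS : ∀ S : Finset ι, 1 ≤ S.card → S.card ≤ 4 → ∑ x ∈ C, chi S x = 0) (a b c : ι) :
    ∑ w ∈ C, sg (w a) * sg (w b) * sg (w c) = 0 := by
  have m1 := mom1 C hS
  by_cases hab : a = b
  · subst hab; simpa [sg_sq] using m1 c
  by_cases hac : a = c
  · subst hac
    simpa [mul_right_comm _ _ (sg (_ : ZMod 2)), sg_sq] using m1 b
  by_cases hbc : b = c
  · subst hbc; simpa [mul_assoc, sg_sq] using m1 a
  have := hS {a, b, c} (by simp) (by simp [hab, hac, hbc])
  simpa [chi, hab, hac, hbc, mul_assoc] using this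

lemma mom4 (C : Finset (ι → ZMod 2)) (hC : C.card = 256)
    (hS : ∀ S : Finset ι, 1 ≤ S.card → S.card ≤ 4 → ∑ x ∈ C, chi S x = 0) (a b i j : ι)
    (hij : i ≠ j) :
    ∑ w ∈ C, sg (w a) * sg (w b) * (sg (w i) * sg (w j)) =
      256 * ((if a = i then 1 else 0) * (if b = j then 1 else 0)
       + (if a = j then 1 else 0) * (if b = i then 1 else 0)) := by
  have m2 := mom2 C hC hS
  have e : ∀ p q r s : ι, (∀ w : ι → ZMod 2, sg (w a) * sg (w b) * (sg (w i) * sg (w j)) =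
      (sg (w p) * sg (w p)) * (sg (w r) * sg (w s))) →
      ∑ w ∈ C, sg (w a) * sg (w b) * (sg (w i) * sg (w j)) = if r = s then 256 else 0 := by
    intro p q r s h
    rw [← m2 r s]
    exact Finset.sum_congr rfl fun w _ => by rw [h, sg_sq, one_mul]
  by_cases hab : a = b
  · subst hab
    rw [e a a i j (fun w => rfl)]
    by_cases hai : a = i <;> by_cases haj : a = j <;> simp_all
  by_cases hai : a = i
  · subst hai
    rw [e a a b j (fun w => by ring)]
    by_cases hbj : b = j <;> simp_all
  by_cases haj : a = j
  · subst haj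
    rw [e a a b i (fun w => by ring)]
    by_cases hbj : b = i <;> simp_all
  by_cases hbi : b = i
  · subst hbi
    rw [e b b a j (fun w => by ring)]
    simp_all
  by_cases hbj : b = j
  · subst hbj
    rw [e b b a i (fun w => by ring)]
    simp_all
  have := hS {a, b, i, j} (by simp) (by simp [*])
  simpa [chi, *, mul_assoc] using this

lemma ip_sq_moment (C : Finset (ι → ZMod 2)) (hC : C.card = 256) (h16 : Fintype.card ι = 16)
    (hS : ∀ S : Finset ι, 1 ≤ S.card → S.card ≤ 4 → ∑ x ∈ C, chi S x = 0) (x : ι → ZMod 2) :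
    ∑ w ∈ C, ip x w = 0 ∧ ∑ w ∈ C, ip x w ^ 2 = 4096 ∧ ∑ w ∈ C, ip x w ^ 3 = 0 ∧
    ∀ i j, i ≠ j → ∑ w ∈ C, ip x w ^ 2 * (sg (w i) * sg (w j)) = 512 * (sg (x i) * sg (x j)) := by
  refine ⟨?_, ?_, ?_, ?_⟩
  · simp_rw [ip]
    rw [Finset.sum_comm]
    simp_rw [← Finset.mul_sum, mom1 C hS]; simp
  · have h : ∀ w, ip x w ^ 2 = ∑ a, ∑ b, (sg (x a) * sg (x b)) * (sg (w a) * sg (w b)) := by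
      intro w
      rw [pow_two, ip, Finset.sum_mul_sum]
      exact Finset.sum_congr rfl fun a _ => Finset.sum_congr rfl fun b _ => by ring
    simp_rw [h]
    rw [Finset.sum_comm]
    have : ∀ a, ∑ w ∈ C, ∑ b, (sg (x a) * sg (x b)) * (sg (w a) * sg (w b)) = 256 := by
      intro a
      rw [Finset.sum_comm]
      simp_rw [← Finset.mul_sum, mom2 C hC hS]
      simp [sg_sq]
    simp [this, h16]
  · have h : ∀ w, ip x w ^ 3 = ∑ a, ∑ b, ∑ c, (sg (x a) * sg (x b) * sg (x c)) *
        (sg (w a) * sg (w b) * sg (w c)) := by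
      intro w
      rw [pow_succ, pow_two, ip, Finset.sum_mul_sum, Finset.sum_mul]
      refine Finset.sum_congr rfl fun a _ => ?_
      rw [Finset.sum_mul]
      refine Finset.sum_congr rfl fun b _ => ?_
      rw [Finset.mul_sum]
      exact Finset.sum_congr rfl fun c _ => by ring
    simp_rw [h]
    rw [Finset.sum_comm]
    refine Finset.sum_eq_zero fun a _ => ?_
    rw [Finset.sum_comm]
    refine Finset.sum_eq_zero fun b _ => ?_
    rw [Finset.sum_comm]
    refine Finset.sum_eq_zero fun c _ => ?_
    rw [← Finset.mul_sum, mom3 C hS, mul_zero]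
  · intro i j hij
    have h : ∀ w, ip x w ^ 2 * (sg (w i) * sg (w j)) = ∑ a, ∑ b, (sg (x a) * sg (x b)) *
        (sg (w a) * sg (w b) * (sg (w i) * sg (w j))) := by
      intro w
      rw [pow_two, ip, Finset.sum_mul_sum, Finset.sum_mul]
      refine Finset.sum_congr rfl fun a _ => ?_
      rw [Finset.sum_mul]
      exact Finset.sum_congr rfl fun b _ => by ring
    simp_rw [h]
    rw [Finset.sum_comm]
    have : ∀ a, ∑ w ∈ C, ∑ b, (sg (x a) * sg (x b)) *
        (sg (w a) * sg (w b) * (sg (w i) * sg (w j))) =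
        256 * ((if a = i then sg (x a) * sg (x j) else 0) +
          (if a = j then sg (x a) * sg (x i) else 0)) := by
      intro a
      rw [Finset.sum_comm]
      simp_rw [← Finset.mul_sum, mom4 C hC hS _ _ i j hij]
      by_cases h1 : a = i <;> by_cases h2 : a = j <;> simp [h1, h2] <;> simp_all <;> ring
    simp_rw [this, ← Finset.mul_sum, Finset.sum_add_distrib]
    simp
    ring
end LP2

/-- quadratic form -/
def Qf (a : Fin 6 → ZMod 2) : ZMod 2 :=
  a 0 + a 1 + a 2 + a 3 + a 4 + a 5 +
  (a 0 * (a 1 + a 2 + a 3 + a 4 + a 5) + a 1 * (a 2 + a 3 + a 4 + a 5) +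
    a 2 * (a 3 + a 4 + a 5) + a 3 * (a 4 + a 5) + a 4 * a 5)

/-- standard Kerdock set -/
def kz (j : Fin 8) (i : Fin 6) : ZMod 2 := if j.val = 7 then 1 else if j.val = i.val + 1 then 1 else 0


lemma fin_dec1 : ∀ a : Fin 6 → ZMod 2, Qf a = 1 → ∀ b, Qf b = 1 → Qf (a + b) = 1 →
    ∃ j : Fin 8, (∃ k : Fin 8, kz k = kz j + a) ∧ ∃ l : Fin 8, kz l = kz j + b := by
  decide +kernel

lemma fin_dec2 : ∀ u v : Fin 8, u < v → ∀ x : Fin 6 → ZMod 2,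
    Qf (x + kz u) = 1 → Qf (x + kz v) = 1 → ∀ w : Fin 8, v < w → Qf (x + kz w) = 1 →
     (∃ j : Fin 8, x = kz j) ∨ x = kz u + kz v + kz w := by
  decide +kernel

lemma fin_dec2' (u v w : Fin 8) (huv : u ≠ v) (huw : u ≠ w) (hvw : v ≠ w) (x : Fin 6 → ZMod 2)
    (hu : Qf (x + kz u) = 1) (hv : Qf (x + kz v) = 1) (hw : Qf (x + kz w) = 1) :
     (∃ j : Fin 8, x = kz j) ∨ x = kz u + kz v + kz w := by
  rcases lt_or_gt_of_ne huv with h1 | h1 <;> rcases lt_or_gt_of_ne huw with h2 | h2 <;>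
    rcases lt_or_gt_of_ne hvw with h3 | h3
  · exact fin_dec2 u v h1 x hu hv w h3 hw
  · rw [add_right_comm]
    exact fin_dec2 u w h2 x hu hw v h3 hv
  · omega
  · rw [show kz u + kz v + kz w = kz w + kz u + kz v by abel]
    exact fin_dec2 w u h2 x hw hu v h1 hv
  · rw [show kz u + kz v + kz w = kz v + kz u + kz w by abel]
    exact fin_dec2 v u h1 x hv hu w h2 hw
  · omega
  · rw [show kz u + kz v + kz w = kz v + kz w + kz u by abel]
    exact fin_dec2 v w h3 x hv hw u h2 hu
  · rw [show kz u + kz v + kz w = kz w + kz v + kz u by abel]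
    exact fin_dec2 w v h3 x hw hv u h1 hu

lemma Qf_plane (y a b : Fin 6 → ZMod 2) :
    Qf y + Qf (y + a) + Qf (y + b) + Qf (y + a + b) = Qf a + Qf b + Qf (a + b) := by
  simp only [Qf, Pi.add_apply]
  have h2 : (2 : ZMod 2) = 0 := by decide
  ring_nf
  simp [show (4 : ZMod 2) = 0 by decide, h2]

lemma fin_add_self (a : Fin 6 → ZMod 2) : a + a = 0 := by
  ext i; exact CharTwo.add_self_eq_zero _

lemma finF (K : Finset (Fin 6 → ZMod 2)) (h8 : 8 ≤ K.card)
    (hQ : ∀ a ∈ K, ∀ b ∈ K, a ≠ b → Qf (a + b) = 1) :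
    ∃ t, ∀ x, x ∈ K ↔ ∃ j, x = t + kz j := by
  obtain ⟨u, hu, a, ha, b, hb, hua, hub, hab⟩ := Finset.two_lt_card.1 (show 2 < K.card by omega)
  have e1 : ∀ p q r : Fin 6 → ZMod 2, (p + q) + (r + q) = p + r := fun p q r => by
    rw [show (p + q) + (r + q) = p + r + (q + q) by abel, fin_add_self, add_zero]
  have e2 : ∀ p q : Fin 6 → ZMod 2, p + q + q = p := fun p q => by
    rw [add_assoc, fin_add_self, add_zero]
  obtain ⟨j, ⟨k, hk⟩, l, hl⟩ := fin_dec1 (a + u) (hQ a ha u hu hua.symm) (b + u)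
    (hQ b hb u hu hub.symm) (by rw [e1]; exact hQ a ha b hb hab)
  set t := u + kz j with ht
  have hj' : u = t + kz j := by rw [ht, e2]
  have hk' : a = t + kz k := by
    rw [hk, ht, show u + kz j + (kz j + (a + u)) = a + (u + u) + (kz j + kz j) by abel,
      fin_add_self, fin_add_self]; simp
  have hl' : b = t + kz l := by
    rw [hl, ht, show u + kz j + (kz j + (b + u)) = b + (u + u) + (kz j + kz j) by abel,
      fin_add_self, fin_add_self]; simp
  have hsub0 : ∀ x ∈ K, (∃ i, x = t + kz i) ∨ x = u + a + b := by
    intro x hx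
    by_cases h1 : x = u
    · exact Or.inl ⟨j, h1.trans hj'⟩
    by_cases h2 : x = a
    · exact Or.inl ⟨k, h2.trans hk'⟩
    by_cases h3 : x = b
    · exact Or.inl ⟨l, h3.trans hl'⟩
    have q1 := hQ x hx u hu h1
    have q2 := hQ x hx a ha h2
    have q3 := hQ x hx b hb h3
    rw [hj', ← add_assoc] at q1
    rw [hk', ← add_assoc] at q2
    rw [hl', ← add_assoc] at q3
    have := fin_dec2' j k l (by rintro rfl; exact hua (hj'.trans hk'.symm))
      (by rintro rfl; exact hub (hj'.trans hl'.symm))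
      (by rintro rfl; exact hab (hk'.trans hl'.symm)) (x + t) q1 q2 q3
    rcases this with ⟨i, hi⟩ | h
    · left; exact ⟨i, by rw [← hi, add_comm x t, ← add_assoc, fin_add_self, zero_add]⟩
    · right
      rw [← e2 x t, h, hj', hk', hl',
        show t + kz j + (t + kz k) + (t + kz l) = kz j + kz k + kz l + t + (t + t) by abel,
        fin_add_self, add_zero]
  have hp : u + a + b ∉ K := by
    intro hp
    have : ({u, a, b, u + a + b} : Finset (Fin 6 → ZMod 2)).card < K.card :=
      lt_of_le_of_lt Finset.card_le_four (by omega)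
    obtain ⟨y, hy, hy'⟩ := Finset.exists_mem_notMem_of_card_lt_card this
    simp only [Finset.mem_insert, Finset.mem_singleton, not_or] at hy'
    obtain ⟨n1, n2, n3, n4⟩ := hy'
    have q := Qf_plane (y + u) (a + u) (b + u)
    rw [e1, e1, show y + a + (b + u) = y + (u + a + b) by abel, e1, hQ y hy u hu n1, hQ y hy a ha n2, hQ y hy b hb n3, hQ y hy _ hp n4,
      hQ a ha u hu hua.symm, hQ b hb u hu hub.symm, hQ a ha b hb hab] at q
    exact absurd q (by decide)
  have hsub : K ⊆ Finset.univ.image (fun i => t + kz i) := by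
    intro x hx
    rcases hsub0 x hx with ⟨i, hi⟩ | h
    · exact Finset.mem_image.2 ⟨i, Finset.mem_univ _, hi.symm⟩
    · exact absurd (h ▸ hx) hp
  have heq := Finset.eq_of_subset_of_card_le hsub
    (Finset.card_image_le.trans (by simpa using h8))
  refine ⟨t, fun x => ?_⟩
  rw [heq]
  simp [eq_comm]

set_option linter.unusedSectionVars false
section Str
variable {ι : Type*} [Fintype ι] [DecidableEq ι]

/-- the basic combinatorial facts about the code -/
structure Basic (C : Finset (ι → ZMod 2)) : Prop where
  card : C.card = 256
  dist : ∀ x ∈ C, ∀ y ∈ C, x ≠ y → hammingDist x y = 6 ∨ hammingDist x y = 8 ∨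
      hammingDist x y = 10 ∨ hammingDist x y = 16
  anti : ∀ x ∈ C, x + 1 ∈ C
  cls : ∀ x ∈ C, (C.filter fun w => 8 ∣ hammingDist x w).card = 32
  sep : ∀ x ∈ C, ∀ i j, i ≠ j → ∑ w ∈ C.filter (fun w => 8 ∣ hammingDist x w),
      sg (w i) * sg (w j) = 0
  trans : ∀ x ∈ C, ∀ y ∈ C, ∀ z ∈ C, 8 ∣ hammingDist x y → 8 ∣ hammingDist x z →
      8 ∣ hammingDist y z

lemma sg_add_one (a : ZMod 2) : sg (a + 1) = - sg a := by revert a; decide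

lemma ip_add_one (x y : ι → ZMod 2) : ip x (y + 1) = - ip x y := by
  simp [ip, sg_add_one]

lemma eq_add_one (h16 : Fintype.card ι = 16) (x w : ι → ZMod 2) (h : hammingDist x w = 16) :
    w = x + 1 := by
  have h' : (Finset.univ.filter fun i => x i ≠ w i) = Finset.univ := by
    apply Finset.eq_univ_of_card
    rw [h16]; exact h
  ext i
  have hi : x i ≠ w i := by
    have := Finset.mem_univ i
    rw [← h'] at this
    simpa using this
  have key : ∀ a b : ZMod 2, a ≠ b → b = a + 1 := by decide
  simpa using key _ _ hi

lemma basic (C : Finset (ι → ZMod 2)) (h16 : Fintype.card ι = 16) (hC : C.card = 256)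
    (hd : ∀ x ∈ C, ∀ y ∈ C, x ≠ y → 6 ≤ hammingDist x y) : Basic C := by
  obtain ⟨hdist, hS⟩ := delsarte C h16 hC hd
  have hip : ∀ x y : ι → ZMod 2, ip x y = 16 - 2 * hammingDist x y := fun x y => by
    rw [ip_eq, h16]; rfl
  have hanti : ∀ x ∈ C, x + 1 ∈ C := by
    intro x hx
    by_contra hx1
    obtain ⟨m1, m2, m3, m4⟩ := ip_sq_moment C hC h16 hS x
    have e : ∀ w ∈ C, ip x w ^ 3 - 16 * ip x w = if x = w then 3840 else 0 := by
      intro w hw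
      rw [hip]
      split_ifs with h
      · simp [h]
      · rcases hdist x hx w hw h with h | h | h | h
        · simp [h]
        · simp [h]
        · simp [h]
        · exact absurd (eq_add_one h16 x w h ▸ hw) hx1
    have := Finset.sum_congr rfl e
    rw [Finset.sum_sub_distrib, ← Finset.mul_sum, m1, m3, Finset.sum_ite_eq, if_pos hx] at this
    norm_num at this
  have hind : ∀ x ∈ C, ∀ w ∈ C, 16 * (if 8 ∣ hammingDist x w then 1 else 0) =
      16 - ip x w ^ 2 + 256 * (if x = w then 1 else 0) + 256 * (if x + 1 = w then 1 else 0) := by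
    intro x hx w hw
    have hne : x ≠ x + 1 := by
      intro h
      have : Nonempty ι := Fintype.card_pos_iff.1 (by omega)
      obtain ⟨i⟩ := this
      simpa using congrFun h i
    have h1 : x + 1 = w ↔ hammingDist x w = 16 := by
      constructor
      · rintro rfl
        have := ip_add_one x x
        rw [hip, hip] at this
        simp at this
        omega
      · intro h; exact (eq_add_one h16 x w h).symm
    by_cases h : x = w
    · subst h
      simp [hip, hne.symm]
    · rcases hdist x hx w hw h with h2 | h2 | h2 | h2 <;> simp [hip, h1, h, h2]
  have hcls : ∀ x ∈ C, (C.filter fun w => 8 ∣ hammingDist x w).card = 32 := by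
    intro x hx
    obtain ⟨m1, m2, m3, m4⟩ := ip_sq_moment C hC h16 hS x
    have := Finset.sum_congr rfl (hind x hx)
    simp only [Finset.sum_add_distrib, Finset.sum_sub_distrib, ← Finset.mul_sum, m2,
      Finset.sum_ite_eq, hx, hanti x hx, if_true, Finset.sum_boole] at this
    simp [hC] at this
    omega
  have hsep : ∀ x ∈ C, ∀ i j, i ≠ j → ∑ w ∈ C.filter (fun w => 8 ∣ hammingDist x w),
      sg (w i) * sg (w j) = 0 := by
    intro x hx i j hij
    obtain ⟨m1, m2, m3, m4⟩ := ip_sq_moment C hC h16 hS x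
    have e : ∀ w ∈ C, 16 * (if 8 ∣ hammingDist x w then sg (w i) * sg (w j) else 0) =
      16 * (sg (w i) * sg (w j)) - ip x w ^ 2 * (sg (w i) * sg (w j)) +
       256 * (if x = w then sg (x i) * sg (x j) else 0) +
       256 * (if x + 1 = w then sg (x i) * sg (x j) else 0) := by
      intro w hw
      have := congrArg (fun u => u * (sg (w i) * sg (w j))) (hind x hx w hw)
      simp only [add_mul, sub_mul, mul_assoc, ite_mul, one_mul, zero_mul] at this
      rw [this]
      congr 1
      · congr 2
        split_ifs with h <;> simp [h]
      · congr 1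
        split_ifs with h
        · simp [← h, sg_add_one]
        · rfl
    have := Finset.sum_congr rfl e
    simp only [Finset.sum_add_distrib, Finset.sum_sub_distrib, ← Finset.mul_sum, m4 i j hij,
      Finset.sum_ite_eq, hx, hanti x hx, if_true, mom2 C hC hS, hij, if_false] at this
    rw [Finset.sum_filter]
    linarith
  refine ⟨hC, hdist, hanti, hcls, hsep, ?_⟩
  have hsum : ∀ x ∈ C, ∀ y, ∑ w ∈ C.filter (fun w => 8 ∣ hammingDist x w), ip y w ^ 2 = 512 := by
    intro x hx y
    have h : ∀ w, ip y w ^ 2 = ∑ a, ∑ b, (sg (y a) * sg (y b)) * (sg (w a) * sg (w b)) := by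
      intro w
      rw [pow_two, ip, Finset.sum_mul_sum]
      exact Finset.sum_congr rfl fun a _ => Finset.sum_congr rfl fun b _ => by ring
    simp_rw [h]
    rw [Finset.sum_comm]
    have : ∀ a, ∑ w ∈ C.filter (fun w => 8 ∣ hammingDist x w),
        ∑ b, (sg (y a) * sg (y b)) * (sg (w a) * sg (w b)) = 32 := by
      intro a
      rw [Finset.sum_comm]
      simp_rw [← Finset.mul_sum]
      rw [Finset.sum_eq_single a]
      · simp [sg_sq, hcls x hx]
      · intro b _ hb
        rw [hsep x hx a b hb.symm, mul_zero]
      · simp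
    simp [this, h16]
  intro x hx y hy z hz hxy hxz
  by_contra hyz
  have hy1 : 8 ∣ hammingDist x (y + 1) := by
    have h1 := ip_add_one x y
    rw [hip, hip] at h1
    have h2 : hammingDist x (y + 1) ≤ 16 := h16 ▸ hammingDist_le_card_fintype
    omega
  have hyne : y ≠ y + 1 := by
    intro h
    have : Nonempty ι := Fintype.card_pos_iff.1 (by omega)
    obtain ⟨i⟩ := this
    simpa using congrFun h i
  have hdy : hammingDist y (y + 1) = 16 := by
    have := ip_add_one y y
    rw [hip, hip] at this
    simp at this
    omega
  have hzy : z ≠ y := by rintro rfl; simp at hyz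
  have hzy1 : z ≠ y + 1 := by rintro rfl; rw [hdy] at hyz; omega
  have hsub : ({y, y + 1, z} : Finset (ι → ZMod 2)) ⊆ C.filter (fun w => 8 ∣ hammingDist x w) := by
    intro w hw
    simp only [Finset.mem_insert, Finset.mem_singleton] at hw
    rw [Finset.mem_filter]
    rcases hw with rfl | rfl | rfl
    · exact ⟨hy, hxy⟩
    · exact ⟨hanti y hy, hy1⟩
    · exact ⟨hz, hxz⟩
  have := Finset.sum_le_sum_of_subset_of_nonneg hsub (f := fun w => ip y w ^ 2)
    (fun _ _ _ => sq_nonneg _)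
  rw [hsum x hx y, Finset.sum_insert (by simp [hyne, hzy.symm]),
    Finset.sum_insert (by simp [hzy1.symm]), Finset.sum_singleton, hip, hip, hip, hdy] at this
  rcases hdist y hy z hz hzy.symm with h | h | h | h
  · rw [h] at this; norm_num at this
  · rw [h] at hyz; omega
  · rw [h] at this; norm_num at this
  · rw [h] at hyz; omega
end Str

set_option linter.unusedSectionVars false
section Lin
variable {ι : Type*} [Fintype ι] [DecidableEq ι]

lemma vadd_self (x : ι → ZMod 2) : x + x = 0 := by
  ext i; exact CharTwo.add_self_eq_zero _

lemma vadd_cancel (x y : ι → ZMod 2) : x + y + y = x := by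
  rw [add_assoc, vadd_self, add_zero]

lemma dist_norm (x y : ι → ZMod 2) : hammingDist x y = hammingNorm (x + y) := by
  rw [hammingDist_eq_hammingNorm]
  congr 1
  ext i
  change -(x i) + y i = x i + y i
  rw [CharTwo.neg_eq]

/-- half the weight, mod 2 -/
def qn (x : ι → ZMod 2) : ZMod 2 := ((hammingNorm x / 2 : ℕ) : ZMod 2)

lemma norm_add (x y : ι → ZMod 2) : hammingNorm (x + y) +
    2 * (Finset.univ.filter fun i => x i ≠ 0 ∧ y i ≠ 0).card = hammingNorm x + hammingNorm y := by
  simp only [hammingNorm, Finset.card_filter, Finset.mul_sum, ← Finset.sum_add_distrib]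
  refine Finset.sum_congr rfl fun i _ => ?_
  have : ∀ a b : ZMod 2, ((if a + b ≠ 0 then 1 else 0) + 2 * (if a ≠ 0 ∧ b ≠ 0 then 1 else 0) : ℕ)
    = (if a ≠ 0 then 1 else 0) + if b ≠ 0 then 1 else 0 := by decide
  exact this (x i) (y i)

lemma dot_card (x y : ι → ZMod 2) : x ⬝ᵥ y =
    (((Finset.univ.filter fun i => x i ≠ 0 ∧ y i ≠ 0).card : ℕ) : ZMod 2) := by
  rw [dotProduct, Finset.card_filter]
  push_cast
  refine Finset.sum_congr rfl fun i _ => ?_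
  have : ∀ a b : ZMod 2, a * b = if a ≠ 0 ∧ b ≠ 0 then 1 else 0 := by decide
  exact this (x i) (y i)

lemma qn_add (x y : ι → ZMod 2) (hx : Even (hammingNorm x)) (hy : Even (hammingNorm y)) :
    qn (x + y) = qn x + qn y + x ⬝ᵥ y := by
  have h := norm_add x y
  rw [qn, qn, qn, dot_card, ← Nat.cast_add, ← Nat.cast_add, ZMod.natCast_eq_natCast_iff']
  obtain ⟨a, ha⟩ := hx
  obtain ⟨b, hb⟩ := hy
  omega

lemma even_add (x y : ι → ZMod 2) (hx : Even (hammingNorm x)) (hy : Even (hammingNorm y)) :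
    Even (hammingNorm (x + y)) := by
  have h := norm_add x y
  rw [Nat.even_iff] at *
  omega

lemma qn_four (a b p : ι → ZMod 2) (ha : Even (hammingNorm a)) (hb : Even (hammingNorm b))
    (hp : Even (hammingNorm p)) :
    a ⬝ᵥ b = qn (a + (b + p)) + qn (a + p) + qn (b + p) + qn p := by
  rw [qn_add a (b + p) ha (even_add b p hb hp), qn_add a p ha hp, dotProduct_add]
  generalize qn (b + p) = u
  generalize qn a = v
  generalize qn p = w
  generalize a ⬝ᵥ b = s
  generalize a ⬝ᵥ p = t
  revert u v w s t
  decide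

/-- the dot product form -/
def Bd : LinearMap.BilinForm (ZMod 2) (ι → ZMod 2) := dotProductBilin (ZMod 2) (ZMod 2)

lemma Bd_apply (x y : ι → ZMod 2) : Bd x y = x ⬝ᵥ y := rfl

lemma Bd_finrank (S : Submodule (ZMod 2) (ι → ZMod 2)) :
    Module.finrank (ZMod 2) S + Module.finrank (ZMod 2) (Bd.orthogonal S) = Fintype.card ι := by
  have hk : (Bd : LinearMap.BilinForm (ZMod 2) (ι → ZMod 2)).ker = ⊥ := by
    rw [LinearMap.ker_eq_bot']
    intro x hx
    exact dotProduct_eq_zero_iff.1 fun y => LinearMap.congr_fun hx y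
  have := LinearMap.BilinForm.finrank_add_finrank_orthogonal' (B := Bd) S
  rw [hk, inf_bot_eq, finrank_bot] at this
  simpa using this

/-- systems of representatives -/
structure KSys (S : Submodule (ZMod 2) (ι → ZMod 2)) (k : Fin 6 → ι → ZMod 2) : Prop where
  perp : ∀ i, ∀ s ∈ S, s ⬝ᵥ k i = 0
  gram : ∀ i j, k i ⬝ᵥ k j = if i = j then 0 else 1
  even : ∀ i, Even (hammingNorm (k i))
  qn : ∀ i, qn (k i) = 1

/-- linear combination -/
def lc (k : Fin 6 → ι → ZMod 2) : (Fin 6 → ZMod 2) →ₗ[ZMod 2] (ι → ZMod 2) :=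
  Fintype.linearCombination (ZMod 2) k

lemma lc_apply (k : Fin 6 → ι → ZMod 2) (a : Fin 6 → ZMod 2) : lc k a = ∑ i, a i • k i := rfl

lemma lc_dec : ∀ a : Fin 6 → ZMod 2, (∀ j, ∑ i, a i * (if i = j then 0 else 1) = 0) → a = 0 := by
  decide +kernel

lemma ksys_inj {S : Submodule (ZMod 2) (ι → ZMod 2)} {k : Fin 6 → ι → ZMod 2} (hk : KSys S k)
    (a : Fin 6 → ZMod 2) (h : lc k a ∈ S) : a = 0 := by
  apply lc_dec
  intro j
  have := hk.perp j _ h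
  rw [lc_apply, sum_dotProduct] at this
  simpa [hk.gram] using this

lemma ksys_finrank {S : Submodule (ZMod 2) (ι → ZMod 2)} {k : Fin 6 → ι → ZMod 2} (hk : KSys S k) :
    Module.finrank (ZMod 2) (LinearMap.range (S.subtype.coprod (lc k))) =
      Module.finrank (ZMod 2) S + 6 := by
  rw [LinearMap.finrank_range_of_inj]
  · simp
  · rw [← LinearMap.ker_eq_bot, LinearMap.ker_eq_bot']
    rintro ⟨s, a⟩ h
    simp only [LinearMap.coprod_apply, Submodule.subtype_apply] at h
    have h1 : lc k a = s := by
      rw [← vadd_cancel (lc k a) s, add_comm (lc k a), h, zero_add]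
    have h2 : a = 0 := ksys_inj hk a (h1 ▸ s.2)
    subst h2
    simp at h1
    simp [Subtype.ext_iff, ← h1]

lemma ksys_le {S : Submodule (ZMod 2) (ι → ZMod 2)} {k : Fin 6 → ι → ZMod 2} (hk : KSys S k)
    (hS : ∀ s ∈ S, ∀ t ∈ S, s ⬝ᵥ t = 0) :
    LinearMap.range (S.subtype.coprod (lc k)) ≤ Bd.orthogonal S := by
  rintro _ ⟨⟨s, a⟩, rfl⟩
  rw [LinearMap.BilinForm.mem_orthogonal_iff]
  intro t ht
  change t ⬝ᵥ _ = 0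
  simp only [LinearMap.coprod_apply, Submodule.subtype_apply, dotProduct_add, lc_apply,
    dotProduct_sum, dotProduct_smul, hk.perp _ t ht, hS t ht s s.2]
  simp

lemma ksys_rank {S : Submodule (ZMod 2) (ι → ZMod 2)} {k : Fin 6 → ι → ZMod 2} (hk : KSys S k)
    (hS : ∀ s ∈ S, ∀ t ∈ S, s ⬝ᵥ t = 0) (h16 : Fintype.card ι = 16) :
    Module.finrank (ZMod 2) S ≤ 5 := by
  have h1 := ksys_finrank hk
  have h2 := Submodule.finrank_mono (ksys_le hk hS)
  have h3 := Bd_finrank S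
  omega

lemma ksys_decomp {S : Submodule (ZMod 2) (ι → ZMod 2)} {k : Fin 6 → ι → ZMod 2} (hk : KSys S k)
    (hS : ∀ s ∈ S, ∀ t ∈ S, s ⬝ᵥ t = 0) (h16 : Fintype.card ι = 16)
    (h5 : Module.finrank (ZMod 2) S = 5) (v : ι → ZMod 2) (hv : ∀ s ∈ S, s ⬝ᵥ v = 0) :
    ∃ a, v + lc k a ∈ S := by
  have h1 := ksys_finrank hk
  have h3 := Bd_finrank S
  have heq := Submodule.eq_of_le_of_finrank_eq (ksys_le hk hS) (by omega)
  have : v ∈ Bd.orthogonal S := by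
    rw [LinearMap.BilinForm.mem_orthogonal_iff]; exact hv
  rw [← heq] at this
  obtain ⟨⟨s, a⟩, h⟩ := this
  refine ⟨a, ?_⟩
  simp only [LinearMap.coprod_apply, Submodule.subtype_apply] at h
  rw [← h, vadd_cancel]
  exact s.2

lemma reps (C : Finset (ι → ZMod 2)) (hB : Basic C) (n : ℕ) (hn : n ≤ 8) :
    ∃ r : Fin n → ι → ZMod 2, (∀ i, r i ∈ C) ∧ ∀ i j, i ≠ j → ¬ 8 ∣ hammingDist (r i) (r j) := by
  induction n with
  | zero => exact ⟨Fin.elim0, fun i => i.elim0, fun i => i.elim0⟩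
  | succ n ih =>
    obtain ⟨r, hr, hr'⟩ := ih (by omega)
    have hlt : (Finset.univ.biUnion fun i => C.filter fun w => 8 ∣ hammingDist (r i) w).card
        < C.card := by
      refine lt_of_le_of_lt Finset.card_biUnion_le ?_
      simp only [hB.cls _ (hr _), hB.card]
      simp
      omega
    obtain ⟨w, hw, hw'⟩ := Finset.exists_mem_notMem_of_card_lt_card hlt
    simp only [Finset.mem_biUnion, Finset.mem_univ, Finset.mem_filter, true_and, not_exists,
      not_and] at hw'
    refine ⟨Fin.cons w r, ?_, ?_⟩
    · intro i
      refine Fin.cases ?_ (fun i => ?_) i <;> simp [hw, hr]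
    · intro i j
      refine Fin.cases ?_ (fun i => ?_) i <;> refine Fin.cases ?_ (fun j => ?_) j
      · simp
      · intro _
        simpa [hammingDist_comm] using hw' j hw
      · intro _
        simpa using hw' i hw
      · intro h
        simpa using hr' i j (by rintro rfl; exact h rfl)

/-- linear structure of the code -/
structure Str (C : Finset (ι → ZMod 2)) (S : Submodule (ZMod 2) (ι → ZMod 2)) : Prop where
  basic : Basic C
  rank : Module.finrank (ZMod 2) S = 5
  add : ∀ c ∈ C, ∀ s ∈ S, c + s ∈ C
  orth : ∀ c ∈ C, ∀ c' ∈ C, ∀ s ∈ S, s ⬝ᵥ (c + c') = 0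
  mem : ∀ c ∈ C, ∀ c' ∈ C, 8 ∣ hammingDist c c' ↔ c + c' ∈ S
  iso : ∀ s ∈ S, ∀ t ∈ S, s ⬝ᵥ t = 0

lemma qn_dist (C : Finset (ι → ZMod 2)) (hB : Basic C) (x y : ι → ZMod 2) (hx : x ∈ C)
    (hy : y ∈ C) : Even (hammingNorm (x + y)) ∧
      qn (x + y) = if 8 ∣ hammingDist x y then 0 else 1 := by
  by_cases h : x = y
  · subst h
    rw [vadd_self]
    simp [qn]
  · unfold qn
    rw [← dist_norm]
    rcases hB.dist x hx y hy h with h | h | h | h <;> rw [h] <;> decide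

lemma perp_aux (C : Finset (ι → ZMod 2)) (hB : Basic C) (x y x' y' : ι → ZMod 2) (hx : x ∈ C)
    (hy : y ∈ C) (hx' : x' ∈ C) (hy' : y' ∈ C) :
    (x + y) ⬝ᵥ (x' + y') = qn (x + x') + qn (x + y') + qn (y + x') + qn (y + y') := by
  rw [qn_four (x + y) (x' + y') (y + y') (qn_dist C hB x y hx hy).1 (qn_dist C hB x' y' hx' hy').1
    (qn_dist C hB y y' hy hy').1]
  rw [show x' + y' + (y + y') = y + x' + y' + y' by abel, vadd_cancel,
    show x + y + (y + x') = x + x' + y + y by abel, vadd_cancel,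
    show x + y + (y + y') = x + y' + y + y by abel, vadd_cancel]

lemma ksys_of_reps (C : Finset (ι → ZMod 2)) (hB : Basic C)
    (S : Submodule (ZMod 2) (ι → ZMod 2)) (hS : ∀ c ∈ C, ∀ c' ∈ C, ∀ s ∈ S, s ⬝ᵥ (c + c') = 0) :
    ∃ k, KSys S k := by
  obtain ⟨r, hr, hr'⟩ := reps C hB 7 (by norm_num)
  have hne : ∀ i : Fin 6, i.succ ≠ 0 := fun i => Fin.succ_ne_zero i
  refine ⟨fun i => r i.succ + r 0, ⟨?_, ?_, ?_, ?_⟩⟩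
  · intro i s hs
    exact hS _ (hr _) _ (hr _) s hs
  · intro i j
    rw [perp_aux C hB _ _ _ _ (hr _) (hr _) (hr _) (hr _), (qn_dist C hB _ _ (hr _) (hr _)).2,
      (qn_dist C hB _ _ (hr _) (hr _)).2, (qn_dist C hB _ _ (hr _) (hr _)).2,
      (qn_dist C hB _ _ (hr _) (hr _)).2, if_neg (hr' _ _ (hne i)), if_neg (hr' _ _ (hne j).symm),
      if_pos (show 8 ∣ hammingDist (r 0) (r 0) by simp)]
    split_ifs with h1 h2 h2
    · decide
    · exact absurd h1 (hr' _ _ (fun h => h2 (Fin.succ_injective _ h)))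
    · subst h2; simp at h1
    · decide
  · intro i
    exact (qn_dist C hB _ _ (hr _) (hr _)).1
  · intro i
    rw [(qn_dist C hB _ _ (hr _) (hr _)).2, if_neg (hr' _ _ (hne i))]

lemma exists_str (C : Finset (ι → ZMod 2)) (h16 : Fintype.card ι = 16) (hB : Basic C) :
    ∃ S, Str C S := by
  classical
  let E : Set (ι → ZMod 2) := {s | ∃ x ∈ C, ∃ y ∈ C, 8 ∣ hammingDist x y ∧ s = x + y}
  let S := Submodule.span (ZMod 2) E
  have horth : ∀ c ∈ C, ∀ c' ∈ C, ∀ s ∈ S, s ⬝ᵥ (c + c') = 0 := by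
    intro c hc c' hc' s hs
    induction hs using Submodule.span_induction with
    | mem s hs =>
      obtain ⟨x, hx, y, hy, hxy, rfl⟩ := hs
      have key : ∀ z ∈ C, (8 ∣ hammingDist x z ↔ 8 ∣ hammingDist y z) := fun z hz =>
        ⟨fun h => hB.trans x hx y hy z hz hxy h, fun h =>
          hB.trans y hy x hx z hz (by rwa [hammingDist_comm]) h⟩
      rw [perp_aux C hB _ _ _ _ hx hy hc hc', (qn_dist C hB x c hx hc).2,
        (qn_dist C hB x c' hx hc').2, (qn_dist C hB y c hy hc).2, (qn_dist C hB y c' hy hc').2]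
      simp only [key c hc, key c' hc']
      split_ifs <;> decide
    | zero => simp
    | add x y _ _ h1 h2 => rw [add_dotProduct, h1, h2, add_zero]
    | smul a x _ h => rw [smul_dotProduct, h, smul_zero]
  have hiso : ∀ s ∈ S, ∀ t ∈ S, s ⬝ᵥ t = 0 := by
    intro s hs t ht
    induction ht using Submodule.span_induction with
    | mem t ht =>
      obtain ⟨x, hx, y, hy, hxy, rfl⟩ := ht
      exact horth x hx y hy s hs
    | zero => simp
    | add x y _ _ h1 h2 => rw [dotProduct_add, h1, h2, add_zero]
    | smul a x _ h => rw [dotProduct_smul, h, smul_zero]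
  obtain ⟨k, hk⟩ := ksys_of_reps C hB S horth
  have hle := ksys_rank hk hiso h16
  have hcard : Fintype.card S = 2 ^ Module.finrank (ZMod 2) S := by
    simpa using Module.card_eq_pow_finrank (K := ZMod 2) (V := S)
  have hcard' : (S : Set (ι → ZMod 2)).toFinset.card = 2 ^ Module.finrank (ZMod 2) S := by
    rw [← hcard, Set.toFinset_card]; rfl
  have himg : ∀ c ∈ C, (C.filter fun w => 8 ∣ hammingDist c w).image (fun w => c + w) ⊆
      (S : Set (ι → ZMod 2)).toFinset := by
    intro c hc s hs
    rw [Finset.mem_image] at hs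
    obtain ⟨w, hw, rfl⟩ := hs
    rw [Finset.mem_filter] at hw
    rw [Set.mem_toFinset]
    exact Submodule.subset_span ⟨c, hc, w, hw.1, hw.2, rfl⟩
  have himgc : ∀ c ∈ C, ((C.filter fun w => 8 ∣ hammingDist c w).image (fun w => c + w)).card
      = 32 := by
    intro c hc
    rw [Finset.card_image_of_injective _ (add_right_injective c), hB.cls c hc]
  have h32 : (2 : ℕ) ^ Module.finrank (ZMod 2) S ≤ 2 ^ 5 := Nat.pow_le_pow_right (by norm_num) hle
  have heq : ∀ c ∈ C, (C.filter fun w => 8 ∣ hammingDist c w).image (fun w => c + w) =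
      (S : Set (ι → ZMod 2)).toFinset := fun c hc =>
    Finset.eq_of_subset_of_card_le (himg c hc) (by rw [himgc c hc, hcard']; exact h32)
  have hsol : ∀ c ∈ C, ∀ s ∈ S, c + s ∈ C ∧ 8 ∣ hammingDist c (c + s) := by
    intro c hc s hs
    have : s ∈ (S : Set (ι → ZMod 2)).toFinset := Set.mem_toFinset.2 hs
    rw [← heq c hc, Finset.mem_image] at this
    obtain ⟨w, hw, rfl⟩ := this
    rw [Finset.mem_filter] at hw
    rw [← add_assoc, vadd_self, zero_add]
    exact hw
  have hne : C.Nonempty := Finset.card_pos.1 (by rw [hB.card]; norm_num)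
  refine ⟨S, hB, ?_, fun c hc s hs => (hsol c hc s hs).1, horth, ?_, hiso⟩
  · obtain ⟨c, hc⟩ := hne
    have := himgc c hc
    rw [heq c hc, hcard'] at this
    exact Nat.pow_right_injective (le_refl 2) (this.trans (by norm_num))
  · intro c hc c' hc'
    constructor
    · intro h
      exact Submodule.subset_span ⟨c, hc, c', hc', h, rfl⟩
    · intro h
      have := (hsol c hc _ h).2
      rwa [← add_assoc, vadd_self, zero_add] at this

lemma Str.mem_iff {C : Finset (ι → ZMod 2)} {S : Submodule (ZMod 2) (ι → ZMod 2)} (h : Str C S)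
    (s : ι → ZMod 2) : s ∈ S ↔ ∃ x ∈ C, ∃ y ∈ C, 8 ∣ hammingDist x y ∧ s = x + y := by
  constructor
  · intro hs
    have hne : C.Nonempty := Finset.card_pos.1 (by rw [h.basic.card]; norm_num)
    obtain ⟨c, hc⟩ := hne
    have e : s = c + (c + s) := by rw [← add_assoc, vadd_self, zero_add]
    exact ⟨c, hc, c + s, h.add c hc s hs, (h.mem _ hc _ (h.add c hc s hs)).2 (by rwa [← e]), e⟩
  · rintro ⟨x, hx, y, hy, hxy, rfl⟩
    exact (h.mem x hx y hy).1 hxy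
end Lin

set_option linter.unusedSectionVars false
section Fin
variable {ι : Type*} [Fintype ι] [DecidableEq ι]

lemma qn_smul {S : Submodule (ZMod 2) (ι → ZMod 2)} {k : Fin 6 → ι → ZMod 2} (hk : KSys S k)
    (c : ZMod 2) (i : Fin 6) : qn (c • k i) = c ∧ Even (hammingNorm (c • k i)) := by
  have : c = 0 ∨ c = 1 := by revert c; decide
  rcases this with rfl | rfl
  · simp [qn]
  · simpa using ⟨hk.qn i, hk.even i⟩

lemma qn_lc {S : Submodule (ZMod 2) (ι → ZMod 2)} {k : Fin 6 → ι → ZMod 2} (hk : KSys S k)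
    (a : Fin 6 → ZMod 2) : qn (lc k a) = Qf a ∧ Even (hammingNorm (lc k a)) := by
  rw [lc_apply, Fin.sum_univ_six]
  have e := fun i => (qn_smul hk (a i) i).2
  have q := fun i => (qn_smul hk (a i) i).1
  have e1 := even_add _ _ (e 0) (e 1)
  have e2 := even_add _ _ e1 (e 2)
  have e3 := even_add _ _ e2 (e 3)
  have e4 := even_add _ _ e3 (e 4)
  have e5 := even_add _ _ e4 (e 5)
  refine ⟨?_, e5⟩
  rw [qn_add _ _ e4 (e 5), qn_add _ _ e3 (e 4), qn_add _ _ e2 (e 3), qn_add _ _ e1 (e 2),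
    qn_add _ _ (e 0) (e 1)]
  simp only [q, add_dotProduct, smul_dotProduct, dotProduct_smul, hk.gram, Qf]
  simp
  ring

lemma standard_form {C : Finset (ι → ZMod 2)} {S : Submodule (ZMod 2) (ι → ZMod 2)}
    (h16 : Fintype.card ι = 16) (h : Str C S) {k : Fin 6 → ι → ZMod 2} (hk : KSys S k) :
    ∃ v, ∀ x, x ∈ C ↔ ∃ j, x + v + lc k (kz j) ∈ S := by
  classical
  have hne : C.Nonempty := Finset.card_pos.1 (by rw [h.basic.card]; norm_num)
  obtain ⟨c0, hc0⟩ := hne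
  have hex : ∀ c ∈ C, ∃ a, (c + c0) + lc k a ∈ S := fun c hc =>
    ksys_decomp hk h.iso h16 h.rank _ (fun s hs => h.orth c hc c0 hc0 s hs)
  choose! α hα using hex
  have hsum : ∀ c ∈ C, ∀ c' ∈ C, c + c' + lc k (α c + α c') ∈ S := by
    intro c hc c' hc'
    have := S.add_mem (hα c hc) (hα c' hc')
    rw [show c + c0 + lc k (α c) + (c' + c0 + lc k (α c')) =
      c + c' + (lc k (α c) + lc k (α c')) + c0 + c0 by abel, vadd_cancel, ← map_add] at this
    exact this
  have h8 : 8 ≤ (C.image α).card := by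
    have := Finset.card_le_mul_card_image (f := α) C 32 (by
      intro b hb
      obtain ⟨c, hc, rfl⟩ := Finset.mem_image.1 hb
      rw [← h.basic.cls c hc]
      apply Finset.card_le_card
      intro c' hc'
      rw [Finset.mem_filter] at hc' ⊢
      refine ⟨hc'.1, (h.mem c hc c' hc'.1).2 ?_⟩
      have := hsum c hc c' hc'.1
      rw [hc'.2, fin_add_self, map_zero, add_zero] at this
      exact this)
    rw [h.basic.card] at this
    omega
  have hQ : ∀ a ∈ C.image α, ∀ b ∈ C.image α, a ≠ b → Qf (a + b) = 1 := by
    intro a ha b hb hab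
    obtain ⟨c, hc, rfl⟩ := Finset.mem_image.1 ha
    obtain ⟨c', hc', rfl⟩ := Finset.mem_image.1 hb
    have hs := hsum c hc c' hc'
    have hn : ¬ 8 ∣ hammingDist c c' := by
      intro hd
      have h1 := (h.mem c hc c' hc').1 hd
      have h2 := S.add_mem h1 hs
      rw [← add_assoc, vadd_self, zero_add] at h2
      have h3 := ksys_inj hk _ h2
      apply hab
      rw [← add_zero (α c), ← fin_add_self (α c'), ← add_assoc, h3, zero_add]
    set s := c + c' + lc k (α c + α c') with hsdef
    have e : c + c' = s + lc k (α c + α c') := by rw [hsdef, vadd_cancel]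
    have hq := (qn_dist C h.basic c c' hc hc').2
    rw [if_neg hn, e] at hq
    obtain ⟨x, hx, y, hy, hxy, hsxy⟩ := (h.mem_iff s).1 hs
    have hqs := qn_dist C h.basic x y hx hy
    rw [if_pos hxy, ← hsxy] at hqs
    have hdot : s ⬝ᵥ lc k (α c + α c') = 0 := by
      simp only [lc_apply, dotProduct_sum, dotProduct_smul, hk.perp _ s hs]
      simp
    rw [qn_add _ _ hqs.1 (qn_lc hk _).2, hqs.2, (qn_lc hk _).1, hdot] at hq
    simpa using hq
  obtain ⟨t, ht⟩ := finF _ h8 hQ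
  refine ⟨c0 + lc k t, fun x => ?_⟩
  have e : ∀ j, x + (c0 + lc k t) + lc k (kz j) = x + c0 + lc k (t + kz j) := fun j => by
    rw [map_add]; abel
  simp only [e]
  constructor
  · intro hx
    obtain ⟨j, hj⟩ := (ht (α x)).1 (Finset.mem_image_of_mem _ hx)
    exact ⟨j, hj ▸ hα x hx⟩
  · rintro ⟨j, hj⟩
    obtain ⟨c, hc, hcj⟩ := Finset.mem_image.1 ((ht (t + kz j)).2 ⟨j, rfl⟩)
    have h1 := S.add_mem (hα c hc) hj
    rw [hcj, show c + c0 + lc k (t + kz j) + (x + c0 + lc k (t + kz j)) =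
      (c + x) + (c0 + lc k (t + kz j)) + (c0 + lc k (t + kz j)) by abel, vadd_cancel] at h1
    have := h.add c hc _ h1
    rwa [← add_assoc, vadd_self, zero_add] at this

lemma translates {C C' : Finset (ι → ZMod 2)} {S : Submodule (ZMod 2) (ι → ZMod 2)}
    (h16 : Fintype.card ι = 16) (h : Str C S) (h' : Str C' S) :
    ∃ v, ∀ x, x ∈ C ↔ x + v ∈ C' := by
  obtain ⟨k, hk⟩ := ksys_of_reps C h.basic S h.orth
  obtain ⟨v, hv⟩ := standard_form h16 h hk
  obtain ⟨w, hw⟩ := standard_form h16 h' hk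
  refine ⟨v + w, fun x => ?_⟩
  rw [hv, hw, ← add_assoc, vadd_cancel]

/-- permute coordinates -/
def pm (σ : Equiv.Perm ι) (x : ι → ZMod 2) : ι → ZMod 2 := fun i => x (σ.symm i)

lemma pm_add (σ : Equiv.Perm ι) (x y : ι → ZMod 2) : pm σ (x + y) = pm σ x + pm σ y := rfl

lemma pm_inj (σ : Equiv.Perm ι) : Function.Injective (pm σ) := by
  intro x y h
  ext i
  simpa [pm] using congrFun h (σ i)

lemma pm_symm (σ : Equiv.Perm ι) (x : ι → ZMod 2) : pm σ (pm σ.symm x) = x := by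
  ext i; simp [pm]

lemma pm_dist (σ : Equiv.Perm ι) (x y : ι → ZMod 2) :
    hammingDist (pm σ x) (pm σ y) = hammingDist x y := by
  unfold hammingDist
  simp only [Finset.card_filter]
  exact Equiv.sum_comp σ.symm (fun i => if x i ≠ y i then 1 else 0)

lemma add_dist (x y v : ι → ZMod 2) : hammingDist (x + v) (y + v) = hammingDist x y := by
  rw [dist_norm, dist_norm, show x + v + (y + v) = x + y + v + v by abel, vadd_cancel]

lemma main_iff {C : Finset (ι → ZMod 2)} {S : Submodule (ZMod 2) (ι → ZMod 2)}
    (h16 : Fintype.card ι = 16) (h : Str C S) (hC : C.card = 256)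
    (hd : ∀ x ∈ C, ∀ y ∈ C, x ≠ y → 6 ≤ hammingDist x y) (σ : Equiv.Perm ι) :
    (∃ v, ∀ x, x ∈ C ↔ pm σ x + v ∈ C) ↔ ∀ s, s ∈ S ↔ pm σ s ∈ S := by
  constructor
  · rintro ⟨v, hv⟩ s
    have key : ∀ x y, pm σ (x + y) = (pm σ x + v) + (pm σ y + v) := fun x y => by
      rw [pm_add, show pm σ x + v + (pm σ y + v) = pm σ x + pm σ y + v + v by abel, vadd_cancel]
    rw [h.mem_iff, h.mem_iff]
    constructor
    · rintro ⟨x, hx, y, hy, hxy, rfl⟩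
      exact ⟨_, (hv x).1 hx, _, (hv y).1 hy, by rwa [add_dist, pm_dist], key x y⟩
    · rintro ⟨x, hx, y, hy, hxy, hs⟩
      have ex : ∀ x, pm σ (pm σ.symm (x + v)) + v = x := fun x => by rw [pm_symm, vadd_cancel]
      refine ⟨pm σ.symm (x + v), (hv _).2 (by rwa [ex]), pm σ.symm (y + v),
        (hv _).2 (by rwa [ex]), by rwa [pm_dist, add_dist], pm_inj σ ?_⟩
      rw [key, ex, ex, hs]
  · intro hS
    classical
    have hC' : (C.image (pm σ)).card = 256 := by
      rw [Finset.card_image_of_injective _ (pm_inj σ), hC]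
    have hB' : Basic (C.image (pm σ)) := by
      refine basic _ h16 hC' ?_
      intro x hx y hy hxy
      obtain ⟨x, hx', rfl⟩ := Finset.mem_image.1 hx
      obtain ⟨y, hy', rfl⟩ := Finset.mem_image.1 hy
      rw [pm_dist]
      exact hd x hx' y hy' (fun h => hxy (by rw [h]))
    obtain ⟨S', hS'⟩ := exists_str _ h16 hB'
    have heq : S' = S := by
      ext s
      rw [hS'.mem_iff]
      constructor
      · rintro ⟨x, hx, y, hy, hxy, rfl⟩
        obtain ⟨x, hx', rfl⟩ := Finset.mem_image.1 hx
        obtain ⟨y, hy', rfl⟩ := Finset.mem_image.1 hy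
        rw [← pm_add, ← hS, h.mem_iff]
        exact ⟨x, hx', y, hy', by rwa [pm_dist] at hxy, rfl⟩
      · intro hs
        rw [← pm_symm σ s, ← hS, h.mem_iff] at hs
        obtain ⟨x, hx, y, hy, hxy, e⟩ := hs
        exact ⟨pm σ x, Finset.mem_image_of_mem _ hx, pm σ y, Finset.mem_image_of_mem _ hy,
          by rwa [pm_dist], by rw [← pm_add, ← e, pm_symm]⟩
    rw [heq] at hS'
    obtain ⟨v, hv⟩ := translates h16 hS' h
    refine ⟨v, fun x => ?_⟩
    rw [← hv]
    constructor
    · exact Finset.mem_image_of_mem _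
    · intro hx
      obtain ⟨y, hy, e⟩ := Finset.mem_image.1 hx
      exact pm_inj σ e ▸ hy

lemma affine_coords {C : Finset (ι → ZMod 2)} {S : Submodule (ZMod 2) (ι → ZMod 2)}
    (h16 : Fintype.card ι = 16) (h : Str C S) :
    ∃ φ : ι ≃ (Fin 4 → ZMod 2), ∀ s : ι → ZMod 2, s ∈ S ↔
      ∃ g : (Fin 4 → ZMod 2) →ᵃ[ZMod 2] ZMod 2, ∀ i, s i = g (φ i) := by
  have hne : C.Nonempty := Finset.card_pos.1 (by rw [h.basic.card]; norm_num)
  obtain ⟨c, hc⟩ := hne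
  have hι : Nonempty ι := Fintype.card_pos_iff.1 (by omega)
  have hone : (1 : ι → ZMod 2) ∈ S := by
    have e : c + (c + 1) = 1 := by rw [← add_assoc, vadd_self, zero_add]
    have := (h.mem c hc (c + 1) (h.basic.anti c hc)).1 (by
      rw [dist_norm, e]; simp [hammingNorm, h16])
    rwa [e] at this
  let one : S := ⟨1, hone⟩
  have hone0 : one ≠ 0 := by
    intro h0
    have := congrFun (congrArg Subtype.val h0) hι.some
    simp [one] at this
  obtain ⟨W, hW⟩ := Submodule.exists_isCompl (Submodule.span (ZMod 2) {one})
  have hWr : Module.finrank (ZMod 2) W = 4 := by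
    have h1 := Submodule.finrank_add_eq_of_isCompl hW
    rw [finrank_span_singleton hone0, h.rank] at h1
    omega
  let b := Module.finBasisOfFinrankEq (ZMod 2) W hWr
  let φ : ι → (Fin 4 → ZMod 2) := fun i m => (b m : ι → ZMod 2) i
  have hspan : ∀ s ∈ S, ∃ (l : Fin 4 → ZMod 2) (d : ZMod 2), ∀ i, s i = ∑ m, l m * φ i m + d := by
    intro s hs
    have : (⟨s, hs⟩ : S) ∈ Submodule.span (ZMod 2) {one} ⊔ W := by
      rw [hW.sup_eq_top]; trivial
    obtain ⟨u, hu, w, hw, e⟩ := Submodule.mem_sup.1 this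
    obtain ⟨d, rfl⟩ := Submodule.mem_span_singleton.1 hu
    refine ⟨b.repr ⟨w, hw⟩, d, fun i => ?_⟩
    have e1 : w = ∑ m, b.repr ⟨w, hw⟩ m • (b m : S) := by
      have := congrArg Subtype.val (b.sum_repr ⟨w, hw⟩)
      rw [Submodule.coe_sum] at this
      exact this.symm
    have e2 := congrFun (congrArg Subtype.val e) i
    rw [e1] at e2
    simp only [Submodule.coe_add, Submodule.coe_smul, Submodule.coe_sum, Pi.add_apply,
      Pi.smul_apply, Finset.sum_apply, smul_eq_mul, one, Pi.one_apply, mul_one] at e2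
    rw [← e2, add_comm]
  have hinj : Function.Injective φ := by
    intro i j hij
    by_contra hne
    have h0 := h.basic.sep c hc i j hne
    have : ∀ w ∈ C.filter (fun w => 8 ∣ hammingDist c w), sg (w i) * sg (w j) =
        sg (c i) * sg (c j) := by
      intro w hw
      rw [Finset.mem_filter] at hw
      obtain ⟨l, d, hl⟩ := hspan _ ((h.mem c hc w hw.1).1 hw.2)
      have e : (c + w) i = (c + w) j := by rw [hl, hl, hij]
      simp only [Pi.add_apply] at e
      generalize c i = p at *
      generalize c j = q at *
      generalize w i = r at *
      generalize w j = t at *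
      revert e
      clear * -
      revert p q r t
      decide
    rw [Finset.sum_congr rfl this, Finset.sum_const, h.basic.cls c hc] at h0
    have h1 := congrArg (fun z => z * (sg (c i) * sg (c j))) h0
    have h2 : (sg (c i) * sg (c j)) * (sg (c i) * sg (c j)) = 1 := by
      linear_combination sg (c j) * sg (c j) * sg_sq (c i) + sg_sq (c j)
    simp only [smul_mul_assoc, h2] at h1
    simp at h1
  have hbij : Function.Bijective φ := by
    rw [Fintype.bijective_iff_injective_and_card]
    exact ⟨hinj, by simp [h16]⟩
  refine ⟨Equiv.ofBijective φ hbij, fun s => ?_⟩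
  constructor
  · intro hs
    obtain ⟨l, d, hl⟩ := hspan s hs
    refine ⟨(∑ m, l m • (LinearMap.proj m : (Fin 4 → ZMod 2) →ₗ[ZMod 2] ZMod 2)).toAffineMap +
      AffineMap.const (ZMod 2) _ d, fun i => ?_⟩
    simp [hl]
  · rintro ⟨g, hg⟩
    have : s = ∑ m, g.linear (Pi.single m 1) • ((b m : S) : ι → ZMod 2) + g 0 • 1 := by
      ext i
      have e1 : g (φ i) = g.linear (φ i) + g 0 := congrFun (AffineMap.decomp g) (φ i)
      have e2 : g.linear (φ i) = ∑ m, φ i m • g.linear (Pi.single m 1) := by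
        have := LinearMap.pi_apply_eq_sum_univ g.linear (φ i)
        rw [this]
        refine Finset.sum_congr rfl fun m _ => ?_
        congr 2
        ext j
        rw [Pi.single_apply]
        simp only [eq_comm]
      rw [hg, Equiv.ofBijective_apply, e1, e2]
      simp [φ, mul_comm]
    rw [this]
    exact S.add_mem (S.sum_mem fun m _ => S.smul_mem _ (b m : S).2) (S.smul_mem _ hone)
end Fin

theorem final (C : Finset (Fin 16 → ZMod 2)) (hC : C.card = 256)
    (hd : ∀ x ∈ C, ∀ y ∈ C, x ≠ y → 6 ≤ hammingDist x y) :
    ∃ G : Subgroup (Equiv.Perm (Fin 16)),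
      (∀ σ, σ ∈ G ↔ ∃ v : Fin 16 → ZMod 2, ∀ x, x ∈ C ↔ pm σ x + v ∈ C) ∧
      Nonempty (G ≃* ((Fin 4 → ZMod 2) ≃ᵃ[ZMod 2] (Fin 4 → ZMod 2))) := by
  have h16 : Fintype.card (Fin 16) = 16 := by simp
  obtain ⟨S, hS⟩ := exists_str C h16 (basic C h16 hC hd)
  obtain ⟨φ, hφ⟩ := affine_coords h16 hS
  let f : ((Fin 4 → ZMod 2) ≃ᵃ[ZMod 2] (Fin 4 → ZMod 2)) →* Equiv.Perm (Fin 16) :=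
    { toFun := fun e => (φ.trans e.toEquiv).trans φ.symm
      map_one' := by ext i; simp [AffineEquiv.one_def]
      map_mul' := fun e e' => by ext i; simp [AffineEquiv.mul_def] }
  have hfa : ∀ e i, φ (f e i) = e (φ i) := fun e i => by simp [f]
  have hfs : ∀ e i, φ ((f e).symm i) = e.symm (φ i) := fun e i => by simp [f]
  have hinj : Function.Injective f := by
    intro e e' h
    ext1 y
    have := hfa e (φ.symm y)
    rw [h, hfa] at this
    simpa using this.symm
  refine ⟨f.range, ?_, ⟨(MonoidHom.ofInjective hinj).symm⟩⟩
  intro σ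
  rw [main_iff h16 hS hC hd]
  constructor
  · rintro ⟨e, rfl⟩ s
    rw [hφ, hφ]
    constructor
    · rintro ⟨g, hg⟩
      exact ⟨g.comp e.symm.toAffineMap, fun i => by simp [pm, hg, hfs]⟩
    · rintro ⟨g, hg⟩
      refine ⟨g.comp e.toAffineMap, fun i => ?_⟩
      have := hg (f e i)
      simpa [pm, hfa] using this
  · intro h
    have hg : ∀ m, ∃ g : (Fin 4 → ZMod 2) →ᵃ[ZMod 2] ZMod 2, ∀ i, φ (σ i) m = g (φ i) := by
      intro m
      have h1 : (fun i => φ (σ i) m) ∈ S := by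
        rw [h, hφ]
        exact ⟨(LinearMap.proj m : (Fin 4 → ZMod 2) →ₗ[ZMod 2] ZMod 2).toAffineMap,
          fun i => by simp [pm]⟩
      exact (hφ _).1 h1
    choose g hg using hg
    have hG : ∀ y, AffineMap.pi g y = φ (σ (φ.symm y)) := by
      intro y
      ext m
      rw [hg]
      simp
    have hb : Function.Bijective (AffineMap.pi g) := by
      have : ⇑(AffineMap.pi g) = ⇑((φ.symm.trans σ).trans φ) := by
        ext1 y; rw [hG]; rfl
      rw [this]
      exact Equiv.bijective _
    refine ⟨AffineEquiv.ofBijective hb, ?_⟩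
    ext1 i
    apply φ.injective
    rw [hfa]
    change AffineMap.pi g (φ i) = _
    rw [hG]
    simp

theorem main_result (C : Set (Fin 16 → ZMod 2)) (hcard : C.ncard = 256)
    (hd : ∀ x ∈ C, ∀ y ∈ C, x ≠ y → 6 ≤ hammingDist x y) :
    ∃ G : Subgroup (Equiv.Perm (Fin 16)),
      (G : Set (Equiv.Perm (Fin 16))) =
        {σ : Equiv.Perm (Fin 16) | ∃ v : Fin 16 → ZMod 2,
          (fun α => (fun i => α (σ.symm i)) + v) '' C = C} ∧
      Nonempty (G ≃* ((Fin 4 → ZMod 2) ≃ᵃ[ZMod 2] (Fin 4 → ZMod 2))) := by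
  classical
  obtain ⟨G, hG, hiso⟩ := final C.toFinset (by rw [← Set.ncard_eq_toFinset_card', hcard])
    (by simpa only [Set.mem_toFinset] using hd)
  refine ⟨G, ?_, hiso⟩
  ext σ
  rw [SetLike.mem_coe, hG]
  change _ ↔ ∃ v : Fin 16 → ZMod 2, _
  refine exists_congr fun v => ?_
  simp only [Set.mem_toFinset]
  constructor
  · intro h
    ext y
    constructor
    · rintro ⟨x, hx, rfl⟩
      exact (h x).1 hx
    · intro hy
      have e : pm σ (pm σ.symm (y + v)) + v = y := by rw [pm_symm, vadd_cancel]
      exact ⟨pm σ.symm (y + v), (h _).2 (by rwa [e]), e⟩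
  · intro h x
    constructor
    · intro hx
      rw [← h]
      exact ⟨x, hx, rfl⟩
    · intro hx
      rw [← h] at hx
      obtain ⟨y, hy, e⟩ := hx
      have : pm σ y = pm σ x := add_right_cancel (b := v) e
      exact pm_inj σ this ▸ hy

end NRCode

/-- For a binary `(16, 256, 6)` code `C`, the image of `Aut(C)` under the projection
to coordinate permutations is isomorphic to the affine group `AGL(4,2) ≅ 2^4:A_8`. -/
theorem stmt_11 (C : Set (Fin 16 → ZMod 2)) (hcard : C.ncard = 256)
    (hd : IsMinDist C 6) :
    ∃ G : Subgroup (Equiv.Perm (Fin 16)),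
      (G : Set (Equiv.Perm (Fin 16))) =
        {σ : Equiv.Perm (Fin 16) | ∃ v : Fin 16 → ZMod 2,
          (fun α => (fun i => α (σ.symm i)) + v) '' C = C} ∧
      Nonempty (G ≃* ((Fin 4 → ZMod 2) ≃ᵃ[ZMod 2] (Fin 4 → ZMod 2))) := by
  exact NRCode.main_result C hcard hd.1
end

section
/- Let C be a binary code of length 16 with exactly 256 codewords and minimum distance 6, containing the zero vector, and let K = {v ∈ F_2^16 : v + C = C} be the set of vectors whose translation fixes C setwise. Then K is an F_2-linear subspace of F_2^16, K ⊆ C, |K| = 32, and every nonzero vector of K has weight 8 or 16. (For the Nordstrom-Robinson code, K is the Reed-Muller code R(1,4).) -/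
open Set

namespace NR
abbrev V := Fin 16 → ZMod 2

def sg (a : ZMod 2) : ℤ := if a = 0 then 1 else -1
lemma sg_add : ∀ a b : ZMod 2, sg (a + b) = sg a * sg b := by decide
lemma sg_sq : ∀ a : ZMod 2, sg a * sg a = 1 := by decide

def chi (t : Finset (Fin 16)) (x : V) : ℤ := ∏ i ∈ t, sg (x i)

lemma chi_add (t : Finset (Fin 16)) (x y : V) : chi t (x + y) = chi t x * chi t y := by
  simp [chi, sg_add, Finset.prod_mul_distrib]

lemma chi_sq (t : Finset (Fin 16)) (x : V) : chi t x * chi t x = 1 := by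
  simp [chi, ← Finset.prod_mul_distrib, sg_sq]

lemma chi_empty (x : V) : chi ∅ x = 1 := by simp [chi]

def Kr (k w : ℕ) : ℤ :=
  ∑ p ∈ Finset.HasAntidiagonal.antidiagonal k, ((-1) ^ p.1 * (w.choose p.1 : ℤ)) * ((16 - w).choose p.2 : ℤ)

lemma wt_le (x : V) : hammingNorm x ≤ 16 := by
  simpa using hammingNorm_le_card_fintype (x := x)

open Polynomial in
lemma coeff_one_sub (w k : ℕ) : (((1 : ℤ[X]) - X) ^ w).coeff k = (-1) ^ k * (w.choose k : ℤ) := by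
  have h : ((1 : ℤ[X]) - X) ^ w = ((1 + X) ^ w).comp (C (-1) * X) := by simp [sub_eq_add_neg]
  rw [h, Polynomial.comp_C_mul_X_coeff, Polynomial.coeff_one_add_X_pow, mul_comm]

open Polynomial in
lemma prod_poly (x : V) : ∏ i, (1 + C (sg (x i)) * X) =
    ((1 : ℤ[X]) - X) ^ hammingNorm x * (1 + X) ^ (16 - hammingNorm x) := by
  have h : ∀ i, (1 + C (sg (x i)) * X : ℤ[X]) = if x i ≠ 0 then 1 - X else 1 + X := by
    intro i
    by_cases hi : x i = 0 <;> simp [sg, hi, sub_eq_add_neg]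
  simp_rw [h]
  rw [Finset.prod_ite, Finset.prod_const, Finset.prod_const]
  congr 2
  have := Finset.card_filter_add_card_filter_not (s := (Finset.univ : Finset (Fin 16))) (fun i => x i ≠ 0)
  simp only [Finset.card_univ, Fintype.card_fin] at this
  unfold hammingNorm
  omega

open Polynomial in
lemma sum_chi (k : ℕ) (x : V) :
    ∑ t ∈ Finset.powersetCard k Finset.univ, chi t x = Kr k (hammingNorm x) := by
  have hterm : ∀ t : Finset (Fin 16), (∏ i ∈ t, (C (sg (x i)) * X : ℤ[X])).coeff k =
      if k = t.card then chi t x else 0 := by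
    intro t
    rw [Finset.prod_mul_distrib, Finset.prod_const, ← map_prod, Polynomial.coeff_C_mul_X_pow]
    rfl
  have h := congrArg (fun p => Polynomial.coeff p k) (prod_poly x)
  simp only [Finset.prod_one_add] at h
  rw [Polynomial.coeff_mul] at h
  simp only [coeff_one_sub, Polynomial.coeff_one_add_X_pow] at h
  rw [Kr, ← h, Polynomial.finsetSum_coeff, Finset.powerset_univ, ← Finset.sum_subset (Finset.subset_univ (Finset.powersetCard k Finset.univ))]
  · refine Finset.sum_congr rfl fun t ht => ?_
    rw [hterm, if_pos (Finset.mem_powersetCard.1 ht).2.symm]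
  · intro t _ ht
    rw [hterm, if_neg]
    intro hk
    exact ht (Finset.mem_powersetCard.2 ⟨Finset.subset_univ _, hk.symm⟩)

def f : ℕ → ℤ
  | 0 => 40 | 1 => 40 | 2 => 12 | 3 => 6 | 4 => 1 | 12 => 1 | 13 => 2 | _ => 0

def G (w : ℕ) : ℤ := ∑ k ∈ Finset.range 17, f k * Kr k w

lemma G_zero : G 0 = 10240 := by decide +kernel
lemma G_le : ∀ w ∈ Finset.Icc 6 16, G w ≤ 0 := by decide +kernel
lemma G_eq : ∀ w ∈ Finset.Icc 6 16, G w = 0 → w = 6 ∨ w = 8 ∨ w = 10 ∨ w = 16 := by decide +kernel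

lemma f_nonneg (n : ℕ) : 0 ≤ f n := by unfold f; split <;> norm_num

lemma sum_f_chi (x : V) : ∑ t, f t.card * chi t x = G (hammingNorm x) := by
  rw [← Finset.powerset_univ, Finset.sum_powerset]
  simp only [Finset.card_univ, Fintype.card_fin]
  unfold G
  refine Finset.sum_congr rfl fun k _ => ?_
  rw [← sum_chi, Finset.mul_sum]
  refine Finset.sum_congr rfl fun t ht => ?_
  rw [(Finset.mem_powersetCard.1 ht).2]


structure Good (C : Finset V) : Prop where
  card : C.card = 256
  dist : ∀ x ∈ C, ∀ y ∈ C, x ≠ y → 6 ≤ hammingNorm (x + y)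

lemma add_self (x : V) : x + x = 0 := by
  funext i
  exact CharTwo.add_self_eq_zero _

lemma add_eq_zero (x y : V) (h : x + y = 0) : x = y := by
  have : x + y + y = y := by rw [h, zero_add]
  rwa [add_assoc, add_self, add_zero] at this

lemma double_sum (C : Finset V) : ∑ x ∈ C, ∑ y ∈ C, G (hammingNorm (x + y)) =
    ∑ t, f t.card * (∑ c ∈ C, chi t c) ^ 2 := by
  simp_rw [← sum_f_chi, chi_add, pow_two, Finset.sum_mul_sum, Finset.mul_sum]
  rw [Finset.sum_comm (s := Finset.univ)]
  refine Finset.sum_congr rfl fun x _ => ?_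
  rw [Finset.sum_comm]

lemma step1 {C : Finset V} (h : Good C) :
    (∀ x ∈ C, ∀ y ∈ C, x ≠ y → G (hammingNorm (x + y)) = 0) ∧
    (∀ t : Finset (Fin 16), t ≠ ∅ → f t.card * (∑ c ∈ C, chi t c) ^ 2 = 0) := by
  have hG : ∀ x ∈ C, ∀ y ∈ C.erase x, 0 ≤ - G (hammingNorm (x + y)) := by
    intro x hx y hy
    have hy' := Finset.mem_erase.1 hy
    have := G_le _ (Finset.mem_Icc.2 ⟨h.dist x hx y hy'.2 hy'.1.symm, wt_le _⟩)
    omega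
  have hE : ∀ t ∈ (Finset.univ : Finset (Finset (Fin 16))).erase ∅,
      0 ≤ f t.card * (∑ c ∈ C, chi t c) ^ 2 :=
    fun t _ => mul_nonneg (f_nonneg _) (sq_nonneg _)
  have h1 : ∑ x ∈ C, ∑ y ∈ C, G (hammingNorm (x + y)) =
      256 * 10240 - ∑ x ∈ C, ∑ y ∈ C.erase x, - G (hammingNorm (x + y)) := by
    have : ∀ x ∈ C, ∑ y ∈ C, G (hammingNorm (x + y)) =
        10240 - ∑ y ∈ C.erase x, - G (hammingNorm (x + y)) := by
      intro x hx
      rw [← Finset.add_sum_erase _ _ hx, add_self, hammingNorm_zero, G_zero, Finset.sum_neg_distrib]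
      ring
    rw [Finset.sum_congr rfl this, Finset.sum_sub_distrib, Finset.sum_const, h.card]
    norm_num
  have h2 : ∑ t, f t.card * (∑ c ∈ C, chi t c) ^ 2 = 40 * 256 ^ 2 +
      ∑ t ∈ (Finset.univ : Finset (Finset (Fin 16))).erase ∅, f t.card * (∑ c ∈ C, chi t c) ^ 2 := by
    rw [← Finset.add_sum_erase _ _ (Finset.mem_univ ∅)]
    simp [chi_empty, h.card, f]
  have h3 := double_sum C
  have hD0 := Finset.sum_nonneg fun x hx => Finset.sum_nonneg (hG x hx)
  have hE0 := Finset.sum_nonneg hE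
  have hD1 : ∑ x ∈ C, ∑ y ∈ C.erase x, - G (hammingNorm (x + y)) = 0 := by linarith
  have hE1 : ∑ t ∈ (Finset.univ : Finset (Finset (Fin 16))).erase ∅,
      f t.card * (∑ c ∈ C, chi t c) ^ 2 = 0 := by linarith
  constructor
  · intro x hx y hy hxy
    have := (Finset.sum_eq_zero_iff_of_nonneg fun x hx => Finset.sum_nonneg (hG x hx)).1 hD1 x hx
    have := (Finset.sum_eq_zero_iff_of_nonneg (hG x hx)).1 this y (Finset.mem_erase.2 ⟨hxy.symm, hy⟩)
    omega
  · intro t ht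
    exact (Finset.sum_eq_zero_iff_of_nonneg hE).1 hE1 t (Finset.mem_erase.2 ⟨ht, Finset.mem_univ _⟩)

lemma Good.wts {C : Finset V} (h : Good C) {x y : V} (hx : x ∈ C) (hy : y ∈ C) :
    hammingNorm (x + y) = 0 ∨ hammingNorm (x + y) = 6 ∨ hammingNorm (x + y) = 8 ∨
      hammingNorm (x + y) = 10 ∨ hammingNorm (x + y) = 16 := by
  by_cases hxy : x = y
  · left; rw [hxy, add_self, hammingNorm_zero]
  · right
    exact G_eq _ (Finset.mem_Icc.2 ⟨h.dist x hx y hy hxy, wt_le _⟩) ((step1 h).1 x hx y hy hxy)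

lemma Good.strength {C : Finset V} (h : Good C) (t : Finset (Fin 16)) (h1 : 1 ≤ t.card)
    (h4 : t.card ≤ 4) : ∑ c ∈ C, chi t c = 0 := by
  have h0 : t ≠ ∅ := by rintro rfl; simp at h1
  have := (step1 h).2 t h0
  have hf : f t.card ≠ 0 := by interval_cases t.card <;> simp [f]
  simpa [hf] using this

lemma Good.sum_Kr {C : Finset V} (h : Good C) (y : V) (k : ℕ) (h1 : 1 ≤ k) (h4 : k ≤ 4) :
    ∑ c ∈ C, Kr k (hammingNorm (c + y)) = 0 := by
  simp_rw [← sum_chi]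
  rw [Finset.sum_comm]
  refine Finset.sum_eq_zero fun t ht => ?_
  have hc := (Finset.mem_powersetCard.1 ht).2
  simp_rw [chi_add, ← Finset.sum_mul]
  rw [h.strength t (by omega) (by omega), zero_mul]

/-- counting codewords at a distance -/
def N (C : Finset V) (y : V) (w : ℕ) : Finset V := C.filter fun c => hammingNorm (c + y) = w

lemma sum_by_wt {C D : Finset V} (h : Good C) (hD : D ⊆ C) {y : V} (hy : y ∈ C) (g : ℕ → ℤ)
    (p : V → ℤ) :
    ∑ c ∈ D, g (hammingNorm (c + y)) * p c =
      g 0 * ∑ c ∈ N D y 0, p c + g 6 * ∑ c ∈ N D y 6, p c + g 8 * ∑ c ∈ N D y 8, p c +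
      g 10 * ∑ c ∈ N D y 10, p c + g 16 * ∑ c ∈ N D y 16, p c := by
  have key : ∀ w, g w * ∑ c ∈ N D y w, p c =
      ∑ c ∈ D, if hammingNorm (c + y) = w then g w * p c else 0 := by
    intro w
    rw [N, Finset.mul_sum, Finset.sum_filter]
  rw [key, key, key, key, key, ← Finset.sum_add_distrib, ← Finset.sum_add_distrib,
    ← Finset.sum_add_distrib, ← Finset.sum_add_distrib]
  refine Finset.sum_congr rfl fun c hc => ?_
  rcases h.wts (hD hc) hy with e | e | e | e | e <;> simp [e]

lemma N_zero {D : Finset V} {y : V} (hy : y ∈ D) : N D y 0 = {y} := by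
  ext c
  simp only [N, Finset.mem_filter, hammingNorm_eq_zero, Finset.mem_singleton]
  constructor
  · rintro ⟨_, h⟩; exact add_eq_zero _ _ h
  · rintro rfl; exact ⟨hy, add_self _⟩

lemma card_by_wt {C D : Finset V} (h : Good C) (hD : D ⊆ C) {y : V} (hy : y ∈ C) (g : ℕ → ℤ) :
    ∑ c ∈ D, g (hammingNorm (c + y)) =
      g 0 * (N D y 0).card + g 6 * (N D y 6).card + g 8 * (N D y 8).card +
      g 10 * (N D y 10).card + g 16 * (N D y 16).card := by
  have := sum_by_wt h hD hy g (fun _ => 1)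
  simpa using this

lemma counts {C : Finset V} (h : Good C) {y : V} (hy : y ∈ C) :
    (N C y 8).card = 30 ∧ (N C y 16).card = 1 ∧ (N C y 6).card + (N C y 10).card = 224 := by
  have e0 := card_by_wt h subset_rfl hy (fun _ => 1)
  have e2 := card_by_wt h subset_rfl hy (Kr 2)
  have e4 := card_by_wt h subset_rfl hy (Kr 4)
  rw [h.sum_Kr y 2 (by norm_num) (by norm_num)] at e2
  rw [h.sum_Kr y 4 (by norm_num) (by norm_num)] at e4
  simp only [Finset.sum_const, h.card, N_zero hy, Finset.card_singleton] at e0 e2 e4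
  rw [show Kr 2 0 = 120 by decide +kernel, show Kr 2 6 = 0 by decide +kernel,
    show Kr 2 8 = -8 by decide +kernel, show Kr 2 10 = 0 by decide +kernel,
    show Kr 2 16 = 120 by decide +kernel] at e2
  rw [show Kr 4 0 = 1820 by decide +kernel, show Kr 4 6 = -20 by decide +kernel,
    show Kr 4 8 = 28 by decide +kernel, show Kr 4 10 = -20 by decide +kernel,
    show Kr 4 16 = 1820 by decide +kernel] at e4
  simp only [nsmul_eq_mul] at e0
  push_cast at e0
  omega

lemma eq_one_of_wt (x : V) (h : hammingNorm x = 16) : x = 1 := by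
  have h2 : ∀ a : ZMod 2, a ≠ 0 → a = 1 := by decide
  unfold hammingNorm at h
  have := Finset.eq_univ_of_card (Finset.univ.filter fun i => x i ≠ 0) (by simpa using h)
  funext i
  have hi : i ∈ Finset.univ.filter fun i => x i ≠ 0 := by rw [this]; exact Finset.mem_univ i
  exact h2 _ (Finset.mem_filter.1 hi).2

lemma antipode {C : Finset V} (h : Good C) {y : V} (hy : y ∈ C) : y + 1 ∈ C := by
  obtain ⟨c, hc⟩ := Finset.card_eq_one.1 (counts h hy).2.1
  have hm : c ∈ N C y 16 := by rw [hc]; simp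
  obtain ⟨hcC, hw⟩ := Finset.mem_filter.1 hm
  have := eq_one_of_wt _ hw
  have : y + 1 = c := by rw [← this, add_comm c y, ← add_assoc, add_self, zero_add]
  rwa [this]

def inter (x y : V) : ℕ := (Finset.univ.filter fun i => x i ≠ 0 ∧ y i ≠ 0).card

lemma wt_add (x y : V) : hammingNorm (x + y) + 2 * inter x y = hammingNorm x + hammingNorm y := by
  unfold hammingNorm inter
  simp only [Finset.card_filter, Finset.mul_sum, ← Finset.sum_add_distrib]
  refine Finset.sum_congr rfl fun i _ => ?_
  have : ∀ a b : ZMod 2, ((if a + b ≠ 0 then 1 else 0) + 2 * if a ≠ 0 ∧ b ≠ 0 then 1 else 0) =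
    (if a ≠ 0 then 1 else 0) + if b ≠ 0 then 1 else 0 := by decide
  exact this _ _

lemma dot_eq (x y : V) : x ⬝ᵥ y = (inter x y : ZMod 2) := by
  unfold inter dotProduct
  rw [Finset.card_filter]
  push_cast
  refine Finset.sum_congr rfl fun i _ => ?_
  have : ∀ a b : ZMod 2, a * b = if a ≠ 0 ∧ b ≠ 0 then 1 else 0 := by decide
  exact this _ _

lemma wt_one : hammingNorm (1 : V) = 16 := by decide
lemma wt_add_one (y : V) : hammingNorm (y + 1) + hammingNorm y = 16 := by
  have h := wt_add y 1
  have : inter y 1 = hammingNorm y := by simp [inter, hammingNorm]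
  rw [this, wt_one] at h
  omega

/-- the class of `y` -/
def W (C : Finset V) (y : V) : Finset V := C.filter fun c => hammingNorm (c + y) % 4 = 0

lemma W_card {C : Finset V} (h : Good C) {y : V} (hy : y ∈ C) : (W C y).card = 32 := by
  have e := card_by_wt h subset_rfl hy (fun w => if w % 4 = 0 then 1 else 0)
  rw [N_zero hy] at e
  obtain ⟨h1, h2, -⟩ := counts h hy
  simp only [h1, h2] at e
  unfold W
  rw [Finset.card_filter]
  simp at e ⊢
  exact_mod_cast e

lemma neg_eq (x : V) : -x = x := by
  funext i
  exact CharTwo.neg_eq _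

lemma chi_mul (t u : Finset (Fin 16)) (x : V) : chi t x * chi u x = chi (symmDiff t u) x := by
  have e : ∀ t, chi t x = ∏ i, if i ∈ t then sg (x i) else 1 := by
    intro t
    rw [chi, Finset.prod_ite_mem, Finset.univ_inter]
  rw [e, e, e, ← Finset.prod_mul_distrib]
  refine Finset.prod_congr rfl fun i _ => ?_
  by_cases h1 : i ∈ t <;> by_cases h2 : i ∈ u <;> simp [Finset.mem_symmDiff, h1, h2, sg_sq]

lemma Good.strength_add {C : Finset V} (h : Good C) (t : Finset (Fin 16)) (h1 : 1 ≤ t.card)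
    (h4 : t.card ≤ 4) (y : V) : ∑ c ∈ C, chi t (c + y) = 0 := by
  simp_rw [chi_add, ← Finset.sum_mul]
  rw [h.strength t h1 h4, zero_mul]

lemma sum_Kr_chi {C : Finset V} (h : Good C) (y : V) (u : Finset (Fin 16)) (hu : u.card = 2) :
    ∑ c ∈ C, Kr 2 (hammingNorm (c + y)) * chi u (c + y) = 256 := by
  simp_rw [← sum_chi, Finset.sum_mul]
  rw [Finset.sum_comm, Finset.sum_eq_single u]
  · simp [chi_sq, h.card]
  · intro t ht htu
    have ht2 := (Finset.mem_powersetCard.1 ht).2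
    simp_rw [chi_mul]
    apply h.strength_add
    · rw [Nat.one_le_iff_ne_zero, ne_eq, Finset.card_eq_zero]
      intro he
      exact htu (symmDiff_eq_bot.1 he)
    · calc (symmDiff t u).card ≤ (t ∪ u).card := Finset.card_le_card symmDiff_le_sup
        _ ≤ t.card + u.card := Finset.card_union_le _ _
        _ ≤ 4 := by omega
  · intro hn
    exact absurd (Finset.mem_powersetCard.2 ⟨Finset.subset_univ _, hu⟩) hn

lemma sum_W_chi {C : Finset V} (h : Good C) {y : V} (hy : y ∈ C) (u : Finset (Fin 16))
    (hu : u.card = 2) : ∑ c ∈ W C y, chi u (c + y) = 0 := by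
  have e1 := sum_Kr_chi h y u hu
  rw [sum_by_wt h subset_rfl hy (Kr 2) (fun c => chi u (c + y))] at e1
  have e2 := sum_by_wt h subset_rfl hy (fun w => if w % 4 = 0 then 1 else 0)
    (fun c => chi u (c + y))
  have h0 : ∑ c ∈ N C y 0, chi u (c + y) = 1 := by
    rw [N_zero hy, Finset.sum_singleton, add_self]
    simp [chi, sg]
  have h16 : ∑ c ∈ N C y 16, chi u (c + y) = 1 := by
    have : ∀ c ∈ N C y 16, chi u (c + y) = 1 := by
      intro c hc
      rw [eq_one_of_wt _ (Finset.mem_filter.1 hc).2]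
      simp [chi, sg, hu]
    rw [Finset.sum_congr rfl this]
    simp [(counts h hy).2.1]
  rw [show Kr 2 0 = 120 by decide +kernel, show Kr 2 6 = 0 by decide +kernel,
    show Kr 2 8 = -8 by decide +kernel, show Kr 2 10 = 0 by decide +kernel,
    show Kr 2 16 = 120 by decide +kernel, h0, h16] at e1
  rw [h0, h16] at e2
  unfold W
  rw [Finset.sum_filter]
  simp only [ite_mul, one_mul, zero_mul] at e2
  rw [e2]
  norm_num
  linarith

lemma W_sub (C : Finset V) (y : V) : W C y ⊆ C := Finset.filter_subset _ _

lemma add_add_cancel_mid (x y c : V) : c + y + (y + x) = c + x := by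
  rw [add_assoc, ← add_assoc y y x, add_self, zero_add]

lemma trans {C : Finset V} (h : Good C) {x y z : V} (hy : y ∈ C) (hx : x ∈ W C y)
    (hz : z ∈ W C y) : hammingNorm (z + x) % 4 = 0 := by
  have hxC := W_sub _ _ hx
  have hs : ∑ c ∈ W C y, Kr 2 (hammingNorm (c + x)) = 0 := by
    simp_rw [← sum_chi]
    rw [Finset.sum_comm]
    refine Finset.sum_eq_zero fun u hu => ?_
    have hu2 := (Finset.mem_powersetCard.1 hu).2
    have : ∀ c, chi u (c + x) = chi u (c + y) * chi u (y + x) := by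
      intro c
      rw [← chi_add, add_add_cancel_mid]
    rw [Finset.sum_congr rfl fun c _ => this c, ← Finset.sum_mul, sum_W_chi h hy u hu2, zero_mul]
  rw [card_by_wt h (W_sub C y) hxC] at hs
  have e0 := card_by_wt h (W_sub C y) hxC (fun _ => 1)
  have hant : x + 1 ∈ N (W C y) x 16 := by
    refine Finset.mem_filter.2 ⟨Finset.mem_filter.2 ⟨antipode h hxC, ?_⟩, ?_⟩
    · have h1 := wt_add_one (x + y)
      have h2 := (Finset.mem_filter.1 hx).2
      rw [add_right_comm]
      omega
    · rw [add_right_comm, add_self, zero_add, wt_one]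
  have hpos := Finset.card_pos.2 ⟨_, hant⟩
  simp only [Finset.sum_const, W_card h hy, N_zero hx, Finset.card_singleton] at e0 hs
  rw [show Kr 2 0 = 120 by decide +kernel, show Kr 2 6 = 0 by decide +kernel,
    show Kr 2 8 = -8 by decide +kernel, show Kr 2 10 = 0 by decide +kernel,
    show Kr 2 16 = 120 by decide +kernel] at hs
  simp only [nsmul_eq_mul] at e0
  push_cast at e0
  have h6 : (N (W C y) x 6).card = 0 := by omega
  have h10 : (N (W C y) x 10).card = 0 := by omega
  rw [Finset.card_eq_zero] at h6 h10
  rcases h.wts (W_sub _ _ hz) hxC with e | e | e | e | e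
  · rw [e]
  · have : z ∈ N (W C y) x 6 := Finset.mem_filter.2 ⟨hz, e⟩
    simp [h6] at this
  · rw [e]
  · have : z ∈ N (W C y) x 10 := Finset.mem_filter.2 ⟨hz, e⟩
    simp [h10] at this
  · rw [e]

/-- the equivalence relation on codewords -/
def rel (x y : V) : Prop := hammingNorm (x + y) % 4 = 0

instance (x y : V) : Decidable (rel x y) := by unfold rel; infer_instance

lemma rel_refl (x : V) : rel x x := by simp [rel, add_self]
lemma rel_symm {x y : V} (h : rel x y) : rel y x := by rwa [rel, add_comm]
lemma rel_trans {C : Finset V} (h : Good C) {x y z : V} (hx : x ∈ C) (hy : y ∈ C) (hz : z ∈ C)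
    (h1 : rel x y) (h2 : rel y z) : rel x z :=
  trans h hy (Finset.mem_filter.2 ⟨hz, rel_symm h2⟩) (Finset.mem_filter.2 ⟨hx, h1⟩)

lemma not_rel {C : Finset V} (h : Good C) {x y : V} (hx : x ∈ C) (hy : y ∈ C) (hn : ¬ rel x y) :
    hammingNorm (x + y) % 4 = 2 := by
  unfold rel at hn
  rcases h.wts hx hy with e | e | e | e | e <;> omega

lemma dot_zero {x y : V} (h : (hammingNorm x + hammingNorm y) % 4 = hammingNorm (x + y) % 4) :
    x ⬝ᵥ y = 0 := by
  have := wt_add x y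
  rw [dot_eq, ZMod.natCast_eq_zero_iff]
  omega

lemma dot_one {x y : V} (h : (hammingNorm x + hammingNorm y) % 4 = (hammingNorm (x + y) + 2) % 4) :
    x ⬝ᵥ y = 1 := by
  have := wt_add x y
  rw [dot_eq]
  have h2 : inter x y % 2 = 1 := by omega
  have := (ZMod.natCast_eq_natCast_iff' (inter x y) 1 2).2 (by omega)
  simpa using this

/-- dot products: one iff the three words 0, x, y lie in three distinct classes -/
lemma dot_ne {C : Finset V} (h : Good C) (h0 : (0 : V) ∈ C) {x y : V} (hx : x ∈ C) (hy : y ∈ C)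
    (h1 : ¬ rel x 0) (h2 : ¬ rel y 0) (h3 : ¬ rel x y) : x ⬝ᵥ y = 1 := by
  have e1 := not_rel h hx h0 h1
  have e2 := not_rel h hy h0 h2
  have e3 := not_rel h hx hy h3
  rw [add_zero] at e1 e2
  exact dot_one (by omega)

lemma dot_rel {C : Finset V} (h : Good C) (h0 : (0 : V) ∈ C) {x y : V} (hx : x ∈ C) (hy : y ∈ C)
    (h3 : rel x y) : x ⬝ᵥ y = 0 := by
  by_cases h1 : rel x 0
  · have h2 := rel_trans h hy hx h0 (rel_symm h3) h1
    unfold rel at h1 h2 h3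
    rw [add_zero] at h1 h2
    exact dot_zero (by omega)
  · have h2 : ¬ rel y 0 := fun h2 => h1 (rel_trans h hx hy h0 h3 h2)
    have e1 := not_rel h hx h0 h1
    have e2 := not_rel h hy h0 h2
    unfold rel at h3
    rw [add_zero] at e1 e2
    exact dot_zero (by omega)

lemma dot_rel_zero {C : Finset V} (h : Good C) (h0 : (0 : V) ∈ C) {x y : V} (hx : x ∈ C)
    (hy : y ∈ C) (h1 : rel x 0) : x ⬝ᵥ y = 0 := by
  by_cases h3 : rel x y
  · exact dot_rel h h0 hx hy h3
  · have h2 : ¬ rel y 0 := fun h2 => h3 (rel_trans h hx h0 hy h1 (rel_symm h2))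
    have e3 := not_rel h hx hy h3
    have e2 := not_rel h hy h0 h2
    unfold rel at h1
    rw [add_zero] at h1 e2
    exact dot_zero (by omega)

lemma exists_new {C : Finset V} (h : Good C) (T : Finset V) (hT : T ⊆ C) (hc : T.card < 8) :
    ∃ c ∈ C, ∀ t ∈ T, ¬ rel c t := by
  by_contra hcon
  push Not at hcon
  have hsub : C ⊆ T.biUnion (W C) := by
    intro c hcC
    obtain ⟨t, ht, hr⟩ := hcon c hcC
    exact Finset.mem_biUnion.2 ⟨t, ht, Finset.mem_filter.2 ⟨hcC, hr⟩⟩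
  have h1 := Finset.card_le_card hsub
  have h2 := Finset.card_biUnion_le_card_mul T (W C) 32 fun t ht => (W_card h (hT ht)).le
  rw [h.card] at h1
  omega

lemma exists_reps {C : Finset V} (h : Good C) (h0 : (0 : V) ∈ C) (n : ℕ) (hn : n ≤ 7) :
    ∃ T : Finset V, T ⊆ C ∧ T.card = n ∧ (∀ x ∈ T, ¬ rel x 0) ∧
      ∀ x ∈ T, ∀ y ∈ T, x ≠ y → ¬ rel x y := by
  induction n with
  | zero => exact ⟨∅, by simp⟩
  | succ n ih =>
    obtain ⟨T, hT, hc, hz, hp⟩ := ih (by omega)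
    obtain ⟨c, hcC, hcT⟩ := exists_new h (insert 0 T) (Finset.insert_subset h0 hT)
      (lt_of_le_of_lt (Finset.card_insert_le _ _) (by omega))
    have hcT' : c ∉ T := fun hm => hcT c (Finset.mem_insert_of_mem hm) (rel_refl c)
    refine ⟨insert c T, Finset.insert_subset hcC hT, by rw [Finset.card_insert_of_notMem hcT', hc],
      ?_, ?_⟩
    · intro x hx
      rcases Finset.mem_insert.1 hx with rfl | hx
      · exact hcT 0 (Finset.mem_insert_self _ _)
      · exact hz x hx
    · intro x hx y hy hxy
      rcases Finset.mem_insert.1 hx with hx' | hx' <;>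
        rcases Finset.mem_insert.1 hy with hy' | hy'
      · exact absurd (hx'.trans hy'.symm) hxy
      · rw [hx']; exact hcT y (Finset.mem_insert_of_mem hy')
      · rw [hy']; exact fun hr => hcT x (Finset.mem_insert_of_mem hx') (rel_symm hr)
      · exact hp x hx' y hy' hxy

def S (C : Finset V) : Submodule (ZMod 2) V := Submodule.span (ZMod 2) (C : Set V)

def R (C : Finset V) : Submodule (ZMod 2) V :=
  (S C).dualAnnihilator.comap (dotProductEquiv (ZMod 2) (Fin 16)).toLinearMap

lemma mem_R {C : Finset V} {x : V} : x ∈ R C ↔ ∀ c ∈ C, x ⬝ᵥ c = 0 := by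
  rw [R, Submodule.mem_comap, Submodule.mem_dualAnnihilator]
  constructor
  · intro hx c hc
    exact hx c (Submodule.subset_span hc)
  · intro hx w hw
    have : S C ≤ LinearMap.ker (dotProductEquiv (ZMod 2) (Fin 16) x) := by
      rw [S, Submodule.span_le]
      intro c hc
      exact hx c hc
    exact this hw

lemma finrank_R (C : Finset V) :
    Module.finrank (ZMod 2) (S C) + Module.finrank (ZMod 2) (R C) = 16 := by
  have h1 := Subspace.finrank_add_finrank_dualAnnihilator_eq (S C)
  have h2 : Module.finrank (ZMod 2) (R C) = Module.finrank (ZMod 2) (S C).dualAnnihilator := by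
    have := LinearEquiv.finrank_eq ((dotProductEquiv (ZMod 2) (Fin 16)).ofSubmodule' (S C).dualAnnihilator)
    exact this
  rw [h2, h1]
  simp

lemma dot_sum_T {T A : Finset V} {j : V} (hA : A ⊆ T) (hj : j ∈ T)
    (hd : ∀ x ∈ T, ∀ y ∈ T, x ⬝ᵥ y = if x = y then 0 else 1) :
    (∑ a ∈ A, a) ⬝ᵥ j = (A.card : ZMod 2) + if j ∈ A then 1 else 0 := by
  rw [sum_dotProduct, Finset.sum_congr rfl fun a ha => hd a (hA ha) j hj]
  have : ∀ a ∈ A, (if a = j then (0 : ZMod 2) else 1) = 1 + if a = j then 1 else 0 := by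
    intro a _
    split <;> decide
  rw [Finset.sum_congr rfl this, Finset.sum_add_distrib]
  simp

lemma S_card {C : Finset V} (h : Good C) (h0 : (0 : V) ∈ C) :
    11 ≤ Module.finrank (ZMod 2) (S C) := by
  obtain ⟨T, hT, hc, hz, hp⟩ := exists_reps h h0 6 (by norm_num)
  have hd : ∀ x ∈ T, ∀ y ∈ T, x ⬝ᵥ y = if x = y then 0 else 1 := by
    intro x hx y hy
    split
    · next e => subst e; exact dot_rel h h0 (hT hx) (hT hx) (rel_refl x)
    · next e => exact dot_ne h h0 (hT hx) (hT hy) (hz x hx) (hz y hy) (hp x hx y hy e)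
  classical
  let F : Finset V := Finset.univ.filter fun x => x ∈ S C
  have hF : (W C 0 ×ˢ T.powerset).card ≤ F.card := by
    apply Finset.card_le_card_of_injOn (fun p => p.1 + ∑ a ∈ p.2, a)
    · rintro ⟨k, A⟩ hp
      have hp := Finset.mem_product.1 hp
      refine Finset.mem_coe.2 (Finset.mem_filter.2 ⟨Finset.mem_univ _, ?_⟩)
      refine Submodule.add_mem _ (Submodule.subset_span (W_sub _ _ hp.1)) ?_
      refine Submodule.sum_mem _ fun a ha => Submodule.subset_span ?_
      exact hT (Finset.mem_powerset.1 hp.2 ha)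
    · rintro ⟨k, A⟩ hkA ⟨l, B⟩ hlB hE
      obtain ⟨hk, hA⟩ := Finset.mem_product.1 hkA
      obtain ⟨hl, hB⟩ := Finset.mem_product.1 hlB
      rw [Finset.mem_powerset] at hA hB
      simp only at hE hk hl hA hB
      have hdot : ∀ j ∈ T, ((A.card : ZMod 2) + if j ∈ A then 1 else 0) =
          (B.card : ZMod 2) + if j ∈ B then 1 else 0 := by
        intro j hj
        have := congrArg (fun v => v ⬝ᵥ j) hE
        simp only [add_dotProduct] at this
        rw [dot_sum_T hA hj hd, dot_sum_T hB hj hd,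
          dot_rel_zero h h0 (W_sub _ _ hk) (hT hj) (Finset.mem_filter.1 hk).2,
          dot_rel_zero h h0 (W_sub _ _ hl) (hT hj) (Finset.mem_filter.1 hl).2, zero_add, zero_add] at this
        exact this
      have hAB : A = B := by
        have h01 : ∀ a b : ZMod 2, a = b ∨ a = b + 1 := by decide
        rcases h01 (A.card : ZMod 2) (B.card : ZMod 2) with e | e
        · ext j
          by_cases hj : j ∈ T
          · have := hdot j hj
            rw [e] at this
            by_cases a : j ∈ A <;> by_cases b : j ∈ B <;> simp [a, b] at this ⊢
          · exact ⟨fun a => absurd (hA a) hj, fun b => absurd (hB b) hj⟩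
        · exfalso
          have hBA : B = T \ A := by
            ext j
            rw [Finset.mem_sdiff]
            by_cases hj : j ∈ T
            · have := hdot j hj
              rw [e] at this
              by_cases a : j ∈ A <;> by_cases b : j ∈ B <;> simp [a, b, hj, add_assoc] at this ⊢
            · exact ⟨fun b => absurd (hB b) hj, fun b => absurd b.1 hj⟩
          have h1 := Finset.card_sdiff_add_card_eq_card hA
          rw [← hBA, hc] at h1
          have h2 : ((B.card + A.card : ℕ) : ZMod 2) = 0 := by rw [h1]; decide
          push_cast at h2
          rw [e, ← add_assoc, CharTwo.add_self_eq_zero, zero_add] at h2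
          exact one_ne_zero h2
      subst hAB
      have := add_right_cancel hE
      rw [this]
  rw [Finset.card_product, W_card h h0, Finset.card_powerset, hc] at hF
  have h1 : F.card = Fintype.card (S C) := by
    rw [Fintype.card_subtype]
  have h2 := Module.card_eq_pow_finrank (K := ZMod 2) (V := S C)
  rw [h1, h2, ZMod.card] at hF
  by_contra hlt
  have : 2 ^ Module.finrank (ZMod 2) (S C) ≤ 2 ^ 10 := Nat.pow_le_pow_right (by norm_num) (by omega)
  omega

lemma R_eq {C : Finset V} (h : Good C) (h0 : (0 : V) ∈ C) : (R C : Set V) = W C 0 := by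
  classical
  let F : Finset V := Finset.univ.filter fun x => x ∈ R C
  have hsub : W C 0 ⊆ F := by
    intro x hx
    refine Finset.mem_filter.2 ⟨Finset.mem_univ _, mem_R.2 fun c hc => ?_⟩
    exact dot_rel_zero h h0 (W_sub _ _ hx) hc (Finset.mem_filter.1 hx).2
  have hF : F.card ≤ (W C 0).card := by
    have h1 : F.card = Fintype.card (R C) := by rw [Fintype.card_subtype]
    have h2 := Module.card_eq_pow_finrank (K := ZMod 2) (V := R C)
    rw [h1, h2, ZMod.card, W_card h h0]
    have := finrank_R C
    have := S_card h h0
    calc 2 ^ Module.finrank (ZMod 2) (R C) ≤ 2 ^ 5 := Nat.pow_le_pow_right (by norm_num) (by omega)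
      _ = 32 := by norm_num
  rw [Finset.eq_of_subset_of_card_le hsub hF]
  ext x
  simp [F]

lemma rel_add_mem {C : Finset V} (h : Good C) (h0 : (0 : V) ∈ C) {x y : V} (hx : x ∈ C)
    (hy : y ∈ C) (hr : rel x y) : x + y ∈ R C := by
  rw [mem_R]
  intro c hc
  rw [add_dotProduct]
  have hs : x ⬝ᵥ c = y ⬝ᵥ c := by
    by_cases hx0 : rel x 0
    · rw [dot_rel_zero h h0 hx hc hx0,
        dot_rel_zero h h0 hy hc (rel_trans h hy hx h0 (rel_symm hr) hx0)]
    have hy0 : ¬ rel y 0 := fun e => hx0 (rel_trans h hx hy h0 hr e)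
    by_cases hc0 : rel c 0
    · rw [dotProduct_comm, dotProduct_comm y, dot_rel_zero h h0 hc hx hc0, dot_rel_zero h h0 hc hy hc0]
    by_cases hxc : rel x c
    · rw [dot_rel h h0 hx hc hxc, dot_rel h h0 hy hc (rel_trans h hy hx hc (rel_symm hr) hxc)]
    · rw [dot_ne h h0 hx hc hx0 hc0 hxc,
        dot_ne h h0 hy hc hy0 hc0 (fun e => hxc (rel_trans h hx hy hc hr e))]
  rw [hs, CharTwo.add_self_eq_zero]

lemma R_add_mem {C : Finset V} (h : Good C) (h0 : (0 : V) ∈ C) {r c : V} (hr : r ∈ R C)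
    (hc : c ∈ C) : r + c ∈ C := by
  have himg : (W C c).image (fun x => x + c) = W C 0 := by
    apply Finset.eq_of_subset_of_card_le
    · intro v hv
      obtain ⟨x, hx, rfl⟩ := Finset.mem_image.1 hv
      have := rel_add_mem h h0 (W_sub _ _ hx) hc (Finset.mem_filter.1 hx).2
      rw [← SetLike.mem_coe, R_eq h h0] at this
      exact this
    · rw [Finset.card_image_of_injective _ (add_left_injective c), W_card h hc, W_card h h0]
  rw [← SetLike.mem_coe, R_eq h h0, ← himg] at hr
  obtain ⟨x, hx, rfl⟩ := Finset.mem_image.1 hr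
  rw [add_assoc, add_self, add_zero]
  exact W_sub _ _ hx

lemma kernel_sub {C : Finset V} (h : Good C) (h0 : (0 : V) ∈ C) {v : V}
    (hv : ∀ c ∈ C, v + c ∈ C) : rel v 0 := by
  have hvC : v ∈ C := by simpa using hv 0 h0
  by_contra hn
  obtain ⟨c, hc, hcT⟩ := exists_new h {0, v} (by
      intro x hx; simp only [Finset.mem_insert, Finset.mem_singleton] at hx
      rcases hx with rfl | rfl <;> assumption)
    (lt_of_le_of_lt (Finset.card_le_two) (by norm_num))
  have hc0 : ¬ rel c 0 := hcT 0 (by simp)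
  have hcv : ¬ rel c v := hcT v (by simp)
  have hw := hv c hc
  obtain ⟨d, hd, hdT⟩ := exists_new h {0, v, c, v + c} (by
      intro x hx; simp only [Finset.mem_insert, Finset.mem_singleton] at hx
      rcases hx with rfl | rfl | rfl | rfl <;> assumption)
    (lt_of_le_of_lt (Finset.card_le_four) (by norm_num))
  have hw0 : ¬ rel (v + c) 0 := by
    intro e
    rw [rel, add_zero, add_comm] at e
    exact hcv e
  have d0 : ¬ rel d 0 := hdT 0 (by simp)
  have e1 := dot_ne h h0 hd hvC d0 hn (hdT v (by simp))
  have e2 := dot_ne h h0 hd hc d0 hc0 (hdT c (by simp))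
  have e3 := dot_ne h h0 hd hw d0 hw0 (hdT _ (by simp))
  rw [dotProduct_add, e1, e2] at e3
  revert e3; decide

end NR

/-- For a binary `(16, 256, 6)` code `C` containing `0`, the set of translations
fixing `C` setwise forms a 32-element linear subspace `K ⊆ C` all of whose nonzero
vectors have weight 8 or 16 (for the Nordstrom-Robinson code, `K` is `R(1,4)`). -/
theorem stmt_12 (C : Set (Fin 16 → ZMod 2)) (h0 : (0 : Fin 16 → ZMod 2) ∈ C)
    (hcard : C.ncard = 256) (hd : IsMinDist C 6) :
    ∃ K : Submodule (ZMod 2) (Fin 16 → ZMod 2),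
      (K : Set (Fin 16 → ZMod 2)) =
        {v : Fin 16 → ZMod 2 | (fun c => v + c) '' C = C} ∧
      (K : Set (Fin 16 → ZMod 2)) ⊆ C ∧
      (K : Set (Fin 16 → ZMod 2)).ncard = 32 ∧
      ∀ v ∈ K, v ≠ 0 → hammingNorm v = 8 ∨ hammingNorm v = 16 := by
  classical
  have hfin : C.Finite := Set.finite_of_ncard_ne_zero (by rw [hcard]; norm_num)
  obtain ⟨D, rfl⟩ : ∃ D : Finset (Fin 16 → ZMod 2), C = ↑D := ⟨hfin.toFinset, by simp⟩
  have hg : NR.Good D := by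
    refine ⟨by rwa [Set.ncard_coe_finset] at hcard, fun x hx y hy hxy => ?_⟩
    have h := hd.1 x hx y hy hxy
    rwa [hammingDist_eq_hammingNorm, NR.neg_eq] at h
  have h0' : (0 : NR.V) ∈ D := h0
  have hR := NR.R_eq hg h0'
  refine ⟨NR.R D, ?_, ?_, ?_, ?_⟩
  · ext v
    simp only [Set.mem_ofPred_eq]
    constructor
    · intro hv
      apply Set.Subset.antisymm
      · rintro _ ⟨c, hc, rfl⟩
        exact NR.R_add_mem hg h0' hv hc
      · intro c hc
        refine ⟨v + c, NR.R_add_mem hg h0' hv hc, ?_⟩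
        simp only
        rw [← add_assoc, NR.add_self, zero_add]
    · intro hv
      have hv' : ∀ c ∈ D, v + c ∈ D := by
        intro c hc
        have : v + c ∈ (fun c => v + c) '' (D : Set (Fin 16 → ZMod 2)) := ⟨c, hc, rfl⟩
        rw [hv] at this
        exact this
      rw [hR]
      exact Finset.mem_filter.2 ⟨by simpa using hv' 0 h0', NR.kernel_sub hg h0' hv'⟩
  · rw [hR]
    exact NR.W_sub D 0
  · rw [hR, Set.ncard_coe_finset, NR.W_card hg h0']
  · intro v hv hv0
    rw [← SetLike.mem_coe, hR] at hv
    obtain ⟨hvD, hw⟩ := Finset.mem_filter.1 hv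
    have hwt := hg.wts hvD h0'
    rw [add_zero] at hwt hw
    rcases hwt with e | e | e | e | e
    · exact absurd (hammingNorm_eq_zero.1 e) hv0
    · omega
    · exact Or.inl e
    · omega
    · exact Or.inr e
end

section
/- Let C be a binary code of length 16 with exactly 256 codewords and minimum distance 6, let p be one of the 16 coordinates, and let C' ⊆ F_2^15 be the punctured code obtained by deleting coordinate p from every codeword of C. Then C' has exactly 256 codewords and minimum distance 5. -/
open Set

theorem puncture_le {n : ℕ} (p : Fin (n+1)) (x y : Fin (n+1) → ZMod 2) :
    hammingDist x y ≤ hammingDist (x ∘ p.succAbove) (y ∘ p.succAbove) + 1 := by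
  unfold hammingDist
  rw [Finset.card_filter, Finset.card_filter, Fin.sum_univ_succAbove _ p]
  simp only [Function.comp_apply]
  split_ifs <;> omega

/-- A packing bound: a code of length 14 and distance at least 5 has fewer than 256 words. -/
theorem packing (S : Finset (Fin 14 → ZMod 2))
    (h : ∀ x ∈ S, ∀ y ∈ S, x ≠ y → 5 ≤ hammingDist x y) : S.card < 256 := by
  classical
  let ind : Finset (Fin 14) → (Fin 14 → ZMod 2) := fun s i => if i ∈ s then 1 else 0
  have hdist : ∀ (c : Fin 14 → ZMod 2) (s : Finset (Fin 14)), hammingDist c (c + ind s) = s.card := by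
    intro c s
    unfold hammingDist
    congr 1
    ext i
    simp [ind]
  have hinj : Set.InjOn (fun q : (Fin 14 → ZMod 2) × Finset (Fin 14) => q.1 + ind q.2)
      (S ×ˢ Finset.powersetCard 2 (Finset.univ : Finset (Fin 14)) :
        Finset ((Fin 14 → ZMod 2) × Finset (Fin 14))) := by
    rintro ⟨c, s⟩ h1 ⟨c', s'⟩ h2 heq
    simp only [Finset.coe_product, Set.mem_prod, Finset.mem_coe, Finset.mem_powersetCard] at h1 h2
    simp only at heq
    have hc : c = c' := by
      by_contra hne
      have h5 := h c h1.1 c' h2.1 hne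
      have ht := hammingDist_triangle c (c + ind s) c'
      have e1 := hdist c s
      have e2 := hdist c' s'
      rw [← heq, hammingDist_comm] at e2
      have := h1.2.2
      have := h2.2.2
      omega
    subst hc
    have he : ind s = ind s' := add_left_cancel heq
    have hs : s = s' := by
      ext i
      have := congrFun he i
      simp only [ind] at this
      by_cases a : i ∈ s <;> by_cases b : i ∈ s' <;> simp_all
    rw [hs]
  have hle := Finset.card_le_card_of_injOn (t := Finset.univ) _ (fun _ _ => Finset.mem_univ _) hinj
  rw [Finset.card_product, Finset.card_powersetCard] at hle
  have h14 : Nat.choose 14 2 = 91 := by decide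
  simp [h14, ZMod.card] at hle
  omega

/-- Puncturing a binary `(16, 256, 6)` code at any coordinate yields a binary
`(15, 256, 5)` code. -/
theorem stmt_13 (C : Set (Fin 16 → ZMod 2)) (hcard : C.ncard = 256)
    (hd : IsMinDist C 6) (p : Fin 16) :
    ((fun α => α ∘ p.succAbove) '' C : Set (Fin 15 → ZMod 2)).ncard = 256 ∧
    IsMinDist ((fun α => α ∘ p.succAbove) '' C) 5 := by
  classical
  obtain ⟨hmin, -⟩ := hd
  have hge : ∀ x ∈ C, ∀ y ∈ C, x ≠ y →
      5 ≤ hammingDist (x ∘ p.succAbove) (y ∘ p.succAbove) := by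
    intro x hx y hy hne
    have := hmin x hx y hy hne
    have := puncture_le p x y
    omega
  have hinj : Set.InjOn (fun α : Fin 16 → ZMod 2 => α ∘ p.succAbove) C := by
    intro x hx y hy hxy
    by_contra hne
    have := hge x hx y hy hne
    simp only at hxy
    rw [hxy, hammingDist_self] at this
    omega
  refine ⟨by rw [Set.ncard_image_of_injOn hinj, hcard], ?_, ?_⟩
  · rintro _ ⟨x, hx, rfl⟩ _ ⟨y, hy, rfl⟩ hne
    exact hge x hx y hy (fun e => hne (by rw [e]))
  · by_contra hno
    have h6 : ∀ x ∈ C, ∀ y ∈ C, x ≠ y →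
        6 ≤ hammingDist (x ∘ p.succAbove) (y ∘ p.succAbove) := by
      intro x hx y hy hne
      have h5 := hge x hx y hy hne
      by_contra hlt
      exact hno ⟨_, ⟨x, hx, rfl⟩, _, ⟨y, hy, rfl⟩, fun e => hne (hinj hx hy e), by
        simp only; omega⟩
    let f : (Fin 16 → ZMod 2) → (Fin 14 → ZMod 2) :=
      fun α => (α ∘ p.succAbove) ∘ (0 : Fin 15).succAbove
    have hf : ∀ x ∈ C, ∀ y ∈ C, x ≠ y → 5 ≤ hammingDist (f x) (f y) := by
      intro x hx y hy hne
      have := h6 x hx y hy hne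
      have := puncture_le (0 : Fin 15) (x ∘ p.succAbove) (y ∘ p.succAbove)
      simp only [f]
      omega
    have hfinj : Set.InjOn f C := by
      intro x hx y hy hxy
      by_contra hne
      have := hf x hx y hy hne
      rw [hxy, hammingDist_self] at this
      omega
    have hp := packing (f '' C).toFinset (by
      intro x hx y hy hne
      rw [Set.mem_toFinset] at hx hy
      obtain ⟨a, ha, rfl⟩ := hx
      obtain ⟨b, hb, rfl⟩ := hy
      exact hf a ha b hb (fun e => hne (by rw [e])))
    rw [← Set.ncard_eq_toFinset_card', Set.ncard_image_of_injOn hfinj, hcard] at hp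
    omega
end

section
/- Let C be a binary completely regular code of length 16 with minimum distance 6 containing the zero vector. Then the set C(6) of weight-6 codewords forms a 3-(16,6,4) design: for every 3-element subset T of the 16 coordinates, there are exactly 4 codewords of weight 6 whose support contains T. In particular |C(6)| = 112. -/
open Set

/-- number of members of `F` at distance `k` from `X` -/
def cntAt (F : Finset (Finset (Fin 16))) (X : Finset (Fin 16)) (k : ℕ) : ℕ :=
  (F.filter (fun A => (symmDiff X A).card = k)).card

/-- number of members of `F` of size `w` containing `X` -/
def cov (F : Finset (Finset (Fin 16))) (w : ℕ) (X : Finset (Fin 16)) : ℕ :=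
  (F.filter (fun A => A.card = w ∧ X ⊆ A)).card

/-- `X` is at distance `d` from `F` -/
def AtD (F : Finset (Finset (Fin 16))) (X : Finset (Fin 16)) (d : ℕ) : Prop :=
  (∀ A ∈ F, d ≤ (symmDiff X A).card) ∧ ∃ A ∈ F, (symmDiff X A).card = d

/-- completely regular family of sets -/
def RegF (F : Finset (Finset (Fin 16))) : Prop :=
  ∀ X Y d, AtD F X d → AtD F Y d → ∀ k, cntAt F X k = cntAt F Y k

@[simp] lemma sd_empty (X : Finset (Fin 16)) : symmDiff X ∅ = X := symmDiff_bot X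

@[simp] lemma empty_sd (X : Finset (Fin 16)) : symmDiff ∅ X = X := bot_symmDiff X

lemma sd_card (X A : Finset (Fin 16)) :
    (symmDiff X A).card + 2 * (X ∩ A).card = X.card + A.card := by
  have h1 : (symmDiff X A).card = (X \ A).card + (A \ X).card := by
    rw [symmDiff_def]
    exact Finset.card_union_of_disjoint disjoint_sdiff_sdiff
  have h2 := Finset.card_sdiff_add_card_inter X A
  have h3 := Finset.card_sdiff_add_card_inter A X
  rw [Finset.inter_comm A X] at h3
  omega

lemma int_le (X A : Finset (Fin 16)) : (X ∩ A).card ≤ X.card :=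
  Finset.card_le_card Finset.inter_subset_left

lemma int_eq (X A : Finset (Fin 16)) : (X ∩ A).card = X.card ↔ X ⊆ A := by
  constructor
  · intro h
    rw [← Finset.inter_eq_left]
    exact Finset.eq_of_subset_of_card_le Finset.inter_subset_left (by omega)
  · intro h
    rw [Finset.inter_eq_left.2 h]

lemma cov_ext (F : Finset (Finset (Fin 16))) (w : ℕ) (X : Finset (Fin 16)) :
    ∑ p ∈ Xᶜ, cov F w (insert p X) = (w - X.card) * cov F w X := by
  unfold cov
  simp_rw [Finset.card_filter]
  rw [Finset.sum_comm, Finset.mul_sum]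
  refine Finset.sum_congr rfl fun A _ => ?_
  by_cases h : A.card = w ∧ X ⊆ A
  · rw [if_pos h, ← Finset.card_filter]
    have : Finset.filter (fun p => A.card = w ∧ insert p X ⊆ A) Xᶜ = A \ X := by
      ext p
      simp only [Finset.mem_filter, Finset.mem_compl, Finset.mem_sdiff, Finset.insert_subset_iff]
      tauto
    rw [this, Finset.card_sdiff_of_subset h.2, h.1, mul_one]
  · rw [if_neg h, mul_zero]
    refine Finset.sum_eq_zero fun p _ => if_neg ?_
    rintro ⟨h1, h2⟩
    exact h ⟨h1, (Finset.subset_insert _ _).trans h2⟩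

section main
variable {F : Finset (Finset (Fin 16))}

lemma wt_ge (h0 : ∅ ∈ F) (hd : ∀ A ∈ F, ∀ B ∈ F, A ≠ B → 6 ≤ (symmDiff A B).card)
    {A : Finset (Fin 16)} (hA : A ∈ F) : A = ∅ ∨ 6 ≤ A.card := by
  by_cases h : A = ∅
  · exact Or.inl h
  · right
    have := hd A hA ∅ h0 h
    simpa using this

lemma atD_small (h0 : ∅ ∈ F) (hd : ∀ A ∈ F, ∀ B ∈ F, A ≠ B → 6 ≤ (symmDiff A B).card)
    (X : Finset (Fin 16)) (hX : X.card ≤ 3) : AtD F X X.card := by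
  refine ⟨fun A hA => ?_, ∅, h0, by simp⟩
  have h1 := sd_card X A
  have h2 := int_le X A
  rcases wt_ge h0 hd hA with rfl | h
  · simp
  · omega

lemma cnt33 (h0 : ∅ ∈ F) (hd : ∀ A ∈ F, ∀ B ∈ F, A ≠ B → 6 ≤ (symmDiff A B).card)
    (X : Finset (Fin 16)) (hX : X.card = 3) : cntAt F X 3 = 1 + cov F 6 X := by
  have : F.filter (fun A => (symmDiff X A).card = 3)
      = insert ∅ (F.filter (fun A => A.card = 6 ∧ X ⊆ A)) := by
    ext A
    simp only [Finset.mem_filter, Finset.mem_insert]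
    have h1 := sd_card X A
    have h2 := int_le X A
    rw [← int_eq]
    constructor
    · rintro ⟨hA, h⟩
      rcases wt_ge h0 hd hA with rfl | h'
      · simp
      · right; refine ⟨hA, ?_, ?_⟩ <;> omega
    · rintro (rfl | ⟨hA, h, h'⟩)
      · simp [h0, hX]
      · refine ⟨hA, ?_⟩; omega
  unfold cntAt cov
  rw [this, Finset.card_insert_of_notMem (by simp), add_comm]

lemma cnt_cov (h0 : ∅ ∈ F) (hd : ∀ A ∈ F, ∀ B ∈ F, A ≠ B → 6 ≤ (symmDiff A B).card)
    (X : Finset (Fin 16)) (k : ℕ) (hk : k ≠ X.card) (hk2 : X.card + k < 8) :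
    cntAt F X k = cov F (X.card + k) X := by
  unfold cntAt cov
  congr 1
  ext A
  simp only [Finset.mem_filter]
  have h1 := sd_card X A
  have h2 := int_le X A
  rw [← int_eq]
  constructor
  · rintro ⟨hA, h⟩
    rcases wt_ge h0 hd hA with rfl | h'
    · simp at h; omega
    · refine ⟨hA, ?_, ?_⟩ <;> omega
  · rintro ⟨hA, h, h'⟩
    refine ⟨hA, ?_⟩; omega

lemma cov_zero (h0 : ∅ ∈ F) (hd : ∀ A ∈ F, ∀ B ∈ F, A ≠ B → 6 ≤ (symmDiff A B).card)
    (w : ℕ) (hw : w < 6) (hw0 : 0 < w) (X : Finset (Fin 16)) : cov F w X = 0 := by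
  unfold cov
  rw [Finset.card_eq_zero, Finset.filter_eq_empty_iff]
  rintro A hA ⟨h, -⟩
  rcases wt_ge h0 hd hA with rfl | h'
  · simp at h; omega
  · omega

lemma cov_le_one (hd : ∀ A ∈ F, ∀ B ∈ F, A ≠ B → 6 ≤ (symmDiff A B).card)
    (X : Finset (Fin 16)) (hX : X.card = 4) : cov F 6 X ≤ 1 := by
  unfold cov
  rw [Finset.card_le_one]
  simp only [Finset.mem_filter]
  rintro A ⟨hA, h1, h2⟩ B ⟨hB, h3, h4⟩
  by_contra hne
  have h5 := hd A hA B hB hne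
  have h6 := sd_card A B
  have h7 := Finset.card_le_card (Finset.subset_inter h2 h4)
  omega

/-- number of weight six members meeting `X` in three points -/
def meet3 (F : Finset (Finset (Fin 16))) (X : Finset (Fin 16)) : ℕ :=
  (F.filter (fun A => A.card = 6 ∧ (X ∩ A).card = 3)).card

lemma cnt44 (h0 : ∅ ∈ F) (hd : ∀ A ∈ F, ∀ B ∈ F, A ≠ B → 6 ≤ (symmDiff A B).card)
    (X : Finset (Fin 16)) (hX : X.card = 4) :
    cntAt F X 4 = 1 + meet3 F X + cov F 8 X := by
  have : F.filter (fun A => (symmDiff X A).card = 4)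
      = insert ∅ (F.filter (fun A => A.card = 6 ∧ (X ∩ A).card = 3) ∪
          F.filter (fun A => A.card = 8 ∧ X ⊆ A)) := by
    ext A
    simp only [Finset.mem_filter, Finset.mem_insert, Finset.mem_union]
    have h1 := sd_card X A
    have h2 := int_le X A
    rw [← int_eq]
    constructor
    · rintro ⟨hA, h⟩
      rcases wt_ge h0 hd hA with rfl | h'
      · simp
      · right
        by_cases h8 : A.card = 8
        · right; refine ⟨hA, ?_, ?_⟩ <;> omega
        · left; refine ⟨hA, ?_, ?_⟩ <;> omega
    · rintro (rfl | ⟨hA, h, h'⟩ | ⟨hA, h, h'⟩)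
      · simp [h0, hX]
      · refine ⟨hA, ?_⟩; omega
      · refine ⟨hA, ?_⟩; omega
  unfold cntAt cov meet3
  rw [this, Finset.card_insert_of_notMem (by simp), Finset.card_union_of_disjoint]
  · ring
  · rw [Finset.disjoint_left]
    simp only [Finset.mem_filter]
    rintro A ⟨_, h, _⟩ ⟨_, h', _⟩
    omega

lemma meet3_sum (X : Finset (Fin 16)) (hX : X.card = 4) :
    ∑ q ∈ X, cov F 6 (X.erase q) = meet3 F X + 4 * cov F 6 X := by
  unfold cov meet3
  simp_rw [Finset.card_filter]
  rw [Finset.sum_comm, Finset.mul_sum, ← Finset.sum_add_distrib]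
  refine Finset.sum_congr rfl fun A _ => ?_
  by_cases hc : A.card = 6
  swap
  · simp [hc]
  simp only [hc, true_and]
  rw [← Finset.card_filter]
  have h2 := int_le X A
  have h3 := Finset.card_sdiff_add_card_inter X A
  by_cases hs : X ⊆ A
  · have h4 := (int_eq X A).2 hs
    rw [if_pos hs, if_neg (show ¬ (X ∩ A).card = 3 by omega), Finset.filter_true_of_mem (s := X), hX]
    · rfl
    exact fun q _ => (Finset.erase_subset _ _).trans hs
  · have h4 : (X ∩ A).card ≠ X.card := fun h => hs ((int_eq X A).1 h)
    rw [if_neg hs]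
    by_cases h5 : (X ∩ A).card = 3
    · rw [if_pos h5]
      have h6 : (X \ A).card = 1 := by omega
      have : Finset.filter (fun q => X.erase q ⊆ A) X = X \ A := by
        obtain ⟨r, hr⟩ := Finset.card_eq_one.1 h6
        have hm : ∀ s, (s ∈ X ∧ s ∉ A) ↔ s = r := by
          intro s; rw [← Finset.mem_sdiff, hr, Finset.mem_singleton]
        ext q
        rw [hr]
        simp only [Finset.mem_filter, Finset.mem_singleton, Finset.subset_iff, Finset.mem_erase]
        constructor
        · rintro ⟨_, h⟩
          by_contra hne
          have := (hm r).2 rfl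
          exact this.2 (h ⟨fun e => hne e.symm, this.1⟩)
        · rintro rfl
          refine ⟨((hm q).2 rfl).1, ?_⟩
          rintro s ⟨h1, h2⟩
          by_contra h3
          exact h1 ((hm s).1 ⟨h2, h3⟩)
      rw [this, h6]
      rfl
    · rw [if_neg h5, mul_zero, add_zero, Finset.card_eq_zero, Finset.filter_eq_empty_iff]
      intro q hq h
      have h7 := Finset.card_le_card (Finset.subset_inter (Finset.erase_subset q X) h)
      rw [Finset.card_erase_of_mem hq] at h7
      omega

lemma flip_card (X A : Finset (Fin 16)) (p : Fin 16) :
    (symmDiff X A).card ≤ (symmDiff (symmDiff X {p}) A).card + 1 ∧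
    (p ∈ symmDiff X A → (symmDiff (symmDiff X {p}) A).card + 1 = (symmDiff X A).card) := by
  have h : symmDiff (symmDiff X {p}) A = symmDiff (symmDiff X A) {p} := by
    rw [symmDiff_assoc, symmDiff_comm {p} A, symmDiff_assoc]
  rw [h]
  have h1 := sd_card (symmDiff X A) {p}
  have h2 : (symmDiff X A ∩ {p}).card ≤ 1 := by
    simpa using Finset.card_le_card (Finset.inter_subset_right (s₁ := symmDiff X A) (s₂ := {p}))
  rw [Finset.card_singleton] at h1
  refine ⟨by omega, fun hp => ?_⟩
  rw [Finset.inter_singleton_of_mem hp, Finset.card_singleton] at h1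
  omega

lemma cnt4_bound (hr : RegF F) (X T : Finset (Fin 16)) (hX : AtD F X 4) (hT : AtD F T 3) :
    4 * cntAt F X 4 ≤ 16 * cntAt F T 3 := by
  have h1 : ∀ p : Fin 16, cntAt F (symmDiff X {p}) 3 ≤ cntAt F T 3 := by
    intro p
    by_cases h : ∃ A ∈ F, (symmDiff (symmDiff X {p}) A).card = 3
    · refine (hr _ _ 3 ⟨fun A hA => ?_, h⟩ hT 3).le
      have := (flip_card X A p).1
      have := hX.1 A hA
      omega
    · push Not at h
      unfold cntAt
      rw [Finset.filter_false_of_mem h]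
      simp
  have h2 : 4 * cntAt F X 4 ≤ ∑ p : Fin 16, cntAt F (symmDiff X {p}) 3 := by
    unfold cntAt
    simp_rw [Finset.card_filter]
    rw [Finset.sum_comm, Finset.mul_sum]
    refine Finset.sum_le_sum fun A _ => ?_
    split_ifs with h
    · rw [← Finset.card_filter, mul_one, ← h]
      refine Finset.card_le_card fun p hp => ?_
      have := (flip_card X A p).2 hp
      simp only [Finset.mem_filter, Finset.mem_univ, true_and]
      omega
    · simp
  refine h2.trans ((Finset.sum_le_sum fun p _ => h1 p).trans ?_)
  simp

lemma fam_main (h0 : ∅ ∈ F) (hd : ∀ A ∈ F, ∀ B ∈ F, A ≠ B → 6 ≤ (symmDiff A B).card)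
    (he : ∃ A ∈ F, ∃ B ∈ F, (symmDiff A B).card = 6) (hr : RegF F) :
    (∀ T : Finset (Fin 16), T.card = 3 → cov F 6 T = 4) ∧ cov F 6 ∅ = 112 := by
  obtain ⟨l, hl⟩ : ∃ l, ∀ T : Finset (Fin 16), T.card = 3 → cov F 6 T = l := by
    refine ⟨cov F 6 {0, 1, 2}, fun T hT => ?_⟩
    have h3 : ({0, 1, 2} : Finset (Fin 16)).card = 3 := rfl
    have a1 := atD_small h0 hd T (by omega)
    have a2 := atD_small h0 hd {0, 1, 2} (by omega)
    rw [hT] at a1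
    rw [h3] at a2
    have := hr _ _ 3 a1 a2 3
    rw [cnt33 h0 hd _ hT, cnt33 h0 hd _ h3] at this
    omega
  have hcompl : ∀ X : Finset (Fin 16), Xᶜ.card = 16 - X.card := by
    intro X; rw [Finset.card_compl, Fintype.card_fin]
  have hins : ∀ (X : Finset (Fin 16)), ∀ p ∈ Xᶜ, (insert p X).card = X.card + 1 := by
    intro X p hp
    exact Finset.card_insert_of_notMem (Finset.mem_compl.1 hp)
  -- pairs
  have hP : ∀ P : Finset (Fin 16), P.card = 2 → 14 * l = 4 * cov F 6 P := by
    intro P hP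
    have := cov_ext F 6 P
    rw [Finset.sum_congr rfl (fun p hp => hl _ (by rw [hins _ p hp, hP])), Finset.sum_const,
      hcompl, hP] at this
    simpa using this
  -- triples
  have hTe : ∀ T : Finset (Fin 16), T.card = 3 → ∑ p ∈ Tᶜ, cov F 6 (insert p T) = 3 * l := by
    intro T hT
    rw [cov_ext, hl T hT, hT]
  let T : Finset (Fin 16) := {0, 1, 2}
  have hT : T.card = 3 := rfl
  have hTc : Tᶜ.card = 13 := by rw [hcompl, hT]
  have aT : AtD F T 3 := by
    have := atD_small h0 hd T (by omega)
    rwa [hT] at this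
  have hP01 := hP {0, 1} rfl
  have aP : AtD F {0, 1} 2 := atD_small h0 hd {0, 1} (by decide)
  have hle1 : ∀ p ∈ Tᶜ, cov F 6 (insert p T) ≤ 1 := by
    intro p hp
    exact cov_le_one hd _ (by rw [hins _ p hp, hT])
  have hl4 : 3 * l ≤ 13 := by
    rw [← hTe T hT]
    refine (Finset.sum_le_sum hle1).trans ?_
    simp [hTc]
  have hlpos : 1 ≤ l := by
    obtain ⟨A, hA, B, hB, hAB⟩ := he
    have a1 : AtD F A 0 := ⟨fun _ _ => Nat.zero_le _, A, hA, by simp⟩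
    have a2 : AtD F ∅ 0 := ⟨fun _ _ => Nat.zero_le _, ∅, h0, by simp⟩
    have h := hr _ _ 0 a1 a2 6
    have h1 : 0 < cntAt F A 6 := Finset.card_pos.2 ⟨B, by simp [hB, hAB]⟩
    rw [h] at h1
    obtain ⟨D, hD⟩ := Finset.card_pos.1 h1
    simp only [Finset.mem_filter] at hD
    have hD6 : D.card = 6 := by simpa using hD.2
    obtain ⟨S, hS, hS3⟩ := Finset.exists_subset_card_eq (s := D) (n := 3) (by omega)
    rw [← hl S hS3]
    exact Finset.card_pos.2 ⟨D, by simp [hD.1, hD6, hS]⟩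
  have hl24 : l = 2 ∨ l = 4 := by omega
  rcases hl24 with rfl | rfl
  · exfalso
    have hct3 : cntAt F T 3 = 3 := by rw [cnt33 h0 hd T hT, hl T hT]
    have hm : ∀ y : Finset (Fin 16), y.card = 4 → meet3 F y + 4 * cov F 6 y = 8 := by
      intro y hy
      rw [← meet3_sum y hy, Finset.sum_congr rfl (fun q hq => hl (y.erase q)
        (by rw [Finset.card_erase_of_mem hq, hy])), Finset.sum_const, hy]
      rfl
    -- distance lower bound for 4-sets
    have hdist : ∀ y : Finset (Fin 16), y.card = 4 → ∀ A ∈ F, (symmDiff y A).card < 4 →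
        (y ⊆ A ∧ ((A.card = 6 ∧ (symmDiff y A).card = 2) ∨
          (A.card = 7 ∧ (symmDiff y A).card = 3))) := by
      intro y hy A hA hlt
      have h1 := sd_card y A
      have h2 := int_le y A
      rw [← int_eq]
      rcases wt_ge h0 hd hA with rfl | h'
      · simp at hlt; omega
      · omega
    have hin : ∀ y : Finset (Fin 16), y.card = 4 → cov F 6 y ≠ 0 →
        cov F 7 y = 0 ∧ cov F 8 y = 2 := by
      intro y hy hne
      have h1 : cov F 6 y = 1 := by have := cov_le_one hd y hy; omega
      have a : AtD F y 2 := by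
        refine ⟨fun A hA => ?_, ?_⟩
        · by_contra hlt
          have := hdist y hy A hA (by omega)
          omega
        · obtain ⟨A, hA⟩ := Finset.card_pos.1 (Nat.pos_of_ne_zero hne)
          simp only [Finset.mem_filter] at hA
          refine ⟨A, hA.1, ?_⟩
          have h1 := sd_card y A
          have h2 := (int_eq y A).2 hA.2.2
          omega
      have e3 := hr _ _ 2 a aP 3
      have e4 := hr _ _ 2 a aP 4
      have hc2 : ({0, 1} : Finset (Fin 16)).card = 2 := rfl
      rw [cnt_cov h0 hd y 3 (by omega) (by omega), hy,
        cnt_cov h0 hd {0, 1} 3 (by rw [hc2]; omega) (by rw [hc2]; omega), hc2,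
        cov_zero h0 hd (2 + 3) (by omega) (by omega)] at e3
      rw [cnt44 h0 hd y hy,
        cnt_cov h0 hd {0, 1} 4 (by rw [hc2]; omega) (by rw [hc2]; omega), hc2] at e4
      have := hm y hy
      refine ⟨e3, ?_⟩
      simp only [Nat.reduceAdd] at e4
      omega
    have h3of : ∀ y : Finset (Fin 16), y.card = 4 → cov F 6 y = 0 → cov F 7 y ≠ 0 →
        AtD F y 3 := by
      intro y hy h6 h7
      refine ⟨fun A hA => ?_, ?_⟩
      · by_contra hlt
        have h := hdist y hy A hA (by omega)
        have h6' : A.card = 6 := by omega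
        have : 0 < cov F 6 y := Finset.card_pos.2 ⟨A, by simp [hA, h6', h.1]⟩
        omega
      · obtain ⟨A, hA⟩ := Finset.card_pos.1 (Nat.pos_of_ne_zero h7)
        simp only [Finset.mem_filter] at hA
        refine ⟨A, hA.1, ?_⟩
        have h1 := sd_card y A
        have h2 := (int_eq y A).2 hA.2.2
        omega
    have h7le : ∀ y : Finset (Fin 16), y.card = 4 → cov F 7 y + 3 * cov F 6 y ≤ 3 := by
      intro y hy
      have h1 := cov_le_one hd y hy
      by_cases h6 : cov F 6 y = 0
      · by_cases h7 : cov F 7 y = 0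
        · omega
        · have e := hr _ _ 3 (h3of y hy h6 h7) aT 3
          rw [hct3, cnt_cov h0 hd y 3 (by omega) (by omega), hy] at e
          simp only [Nat.reduceAdd] at e
          omega
      · have := (hin y hy h6).1
        omega
    have hmu : 4 * cov F 7 T ≤ 21 := by
      have e := cov_ext F 7 T
      rw [hT] at e
      have e6 := hTe T hT
      have := Finset.sum_le_sum (s := Tᶜ) (fun p hp => h7le (insert p T) (by rw [hins _ p hp, hT]))
      rw [Finset.sum_add_distrib, ← Finset.mul_sum, e, e6, Finset.sum_const, hTc] at this
      simp only [smul_eq_mul] at this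
      omega
    have h70 : ∀ y : Finset (Fin 16), y.card = 4 → cov F 6 y = 0 → cov F 7 y = 0 := by
      intro y hy h6
      by_contra h7
      have e := hr _ _ 3 (h3of y hy h6 h7) aT 4
      rw [cnt44 h0 hd y hy, cnt_cov h0 hd T 4 (by omega) (by omega), hT] at e
      have := hm y hy
      simp only [Nat.reduceAdd] at e
      omega
    have a4 : ∀ y : Finset (Fin 16), y.card = 4 → cov F 6 y = 0 → AtD F y 4 := by
      intro y hy h6
      refine ⟨fun A hA => ?_, ∅, h0, by simp [hy]⟩
      by_contra hlt
      have h := hdist y hy A hA (by omega)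
      rcases h with ⟨hs, ⟨hc, -⟩ | ⟨hc, -⟩⟩
      · have : 0 < cov F 6 y := Finset.card_pos.2 ⟨A, by simp [hA, hc, hs]⟩
        omega
      · have : 0 < cov F 7 y := Finset.card_pos.2 ⟨A, by simp [hA, hc, hs]⟩
        have := h70 y hy h6
        omega
    obtain ⟨p0, hp0, hp06⟩ : ∃ p ∈ Tᶜ, cov F 6 (insert p T) = 0 := by
      by_contra hcon
      push Not at hcon
      have := Finset.sum_le_sum (s := Tᶜ) (f := fun _ => 1)
        (g := fun p => cov F 6 (insert p T)) (fun p hp => Nat.pos_of_ne_zero (hcon p hp))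
      rw [hTe T hT] at this
      simp [hTc] at this
    have hy0 : (insert p0 T).card = 4 := by rw [hins _ p0 hp0, hT]
    obtain ⟨n, hn⟩ : ∃ n, cov F 8 (insert p0 T) = n := ⟨_, rfl⟩
    have hn3 : n ≤ 3 := by
      have h := cnt4_bound hr _ T (a4 _ hy0 hp06) aT
      rw [hct3, cnt44 h0 hd _ hy0, hn] at h
      have := hm _ hy0
      omega
    have h8 : ∀ y : Finset (Fin 16), y.card = 4 → cov F 8 y + n * cov F 6 y
        = 2 * cov F 6 y + n := by
      intro y hy
      have h1 := cov_le_one hd y hy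
      by_cases h6 : cov F 6 y = 0
      · have e := hr _ _ 4 (a4 y hy h6) (a4 _ hy0 hp06) 4
        rw [cnt44 h0 hd _ hy0, cnt44 h0 hd _ hy, hn] at e
        have := hm _ hy0
        have := hm _ hy
        rw [h6]
        omega
      · have := (hin y hy h6).2
        have h61 : cov F 6 y = 1 := by omega
        rw [h61]
        omega
    have hs := Finset.sum_congr (s₁ := Tᶜ) rfl
      (fun p hp => h8 (insert p T) (by rw [hins _ p hp, hT]))
    rw [Finset.sum_add_distrib, Finset.sum_add_distrib, ← Finset.mul_sum, ← Finset.mul_sum,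
      cov_ext, hTe T hT, hT, Finset.sum_const, hTc, smul_eq_mul] at hs
    omega
  · refine ⟨hl, ?_⟩
    have h1 : ∀ p : Fin 16, cov F 6 {p} = 42 := by
      intro p
      have := cov_ext F 6 {p}
      rw [Finset.sum_congr rfl (fun q hq => show cov F 6 (insert q {p}) = 14 by
        have := hP (insert q {p}) (by rw [hins _ q hq]; rfl)
        omega), Finset.sum_const, hcompl, Finset.card_singleton] at this
      simp only [smul_eq_mul] at this
      omega
    have := cov_ext F 6 ∅
    rw [Finset.sum_congr rfl (fun q hq => show cov F 6 (insert q ∅) = 42 from h1 q),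
      Finset.sum_const, hcompl, Finset.card_empty] at this
    simp only [smul_eq_mul] at this
    omega

end main

/-- support of a vector -/
def suppF (x : Fin 16 → ZMod 2) : Finset (Fin 16) := Finset.univ.filter (fun i => x i ≠ 0)

/-- indicator vector -/
def indF (A : Finset (Fin 16)) : Fin 16 → ZMod 2 := fun i => if i ∈ A then 1 else 0

lemma supp_ind (A : Finset (Fin 16)) : suppF (indF A) = A := by
  ext i; simp [suppF, indF]

lemma zmod2_cases : ∀ a : ZMod 2, a = 0 ∨ a = 1 := by decide

lemma zmod2_ne : ∀ a b : ZMod 2, a ≠ b ↔ ((a ≠ 0 ∧ ¬ b ≠ 0) ∨ (b ≠ 0 ∧ ¬ a ≠ 0)) := by decide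

lemma ind_supp (x : Fin 16 → ZMod 2) : indF (suppF x) = x := by
  ext i
  rcases zmod2_cases (x i) with h | h <;> simp [suppF, indF, h]

lemma supp_inj : Function.Injective suppF := fun x y h => by
  rw [← ind_supp x, ← ind_supp y, h]

lemma dist_supp (x y : Fin 16 → ZMod 2) :
    hammingDist x y = (symmDiff (suppF x) (suppF y)).card := by
  unfold hammingDist
  congr 1
  ext i
  simp only [Finset.mem_filter, Finset.mem_univ, true_and, Finset.mem_symmDiff, suppF]
  exact zmod2_ne _ _

lemma norm_supp (x : Fin 16 → ZMod 2) : hammingNorm x = (suppF x).card := rfl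

/-- The family of supports of a code -/
noncomputable def famF (C : Set (Fin 16 → ZMod 2)) : Finset (Finset (Fin 16)) :=
  (Set.toFinite (suppF '' C)).toFinset

lemma mem_fam (C : Set (Fin 16 → ZMod 2)) (A : Finset (Fin 16)) :
    A ∈ famF C ↔ ∃ x ∈ C, suppF x = A := by
  simp [famF]

lemma ncard_fam (C : Set (Fin 16 → ZMod 2)) (p : (Fin 16 → ZMod 2) → Prop)
    (q : Finset (Fin 16) → Prop) [DecidablePred q] (h : ∀ x, p x ↔ q (suppF x)) :
    {c ∈ C | p c}.ncard = ((famF C).filter q).card := by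
  rw [← Set.ncard_image_of_injective _ supp_inj, ← Set.ncard_coe_finset]
  congr 1
  ext A
  simp only [Set.mem_image, Set.mem_ofPred_eq, Finset.coe_filter, mem_fam]
  constructor
  · rintro ⟨x, ⟨hx, hp⟩, rfl⟩
    exact ⟨⟨x, hx, rfl⟩, (h x).1 hp⟩
  · rintro ⟨⟨x, hx, rfl⟩, hq⟩
    exact ⟨x, ⟨hx, (h x).2 hq⟩, rfl⟩

lemma dist_atD (C : Set (Fin 16 → ZMod 2)) (X : Finset (Fin 16)) (d : ℕ)
    (h : AtD (famF C) X d) : distToCode C (indF X) = d := by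
  obtain ⟨h1, A, hA, hAd⟩ := h
  obtain ⟨x, hx, rfl⟩ := (mem_fam _ _).1 hA
  unfold distToCode
  apply le_antisymm
  · refine Nat.sInf_le ⟨x, hx, ?_⟩
    rw [dist_supp, supp_ind, hAd]
  · refine le_csInf ⟨_, x, hx, rfl⟩ ?_
    rintro e ⟨c, hc, rfl⟩
    rw [dist_supp, supp_ind]
    exact h1 _ ((mem_fam _ _).2 ⟨c, hc, rfl⟩)

/-- In a binary completely regular code of length 16 with minimum distance 6
containing `0`, the weight-6 codewords form a 3-(16,6,4) design; in particular
there are 112 codewords of weight 6. -/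
theorem stmt_14 (C : Set (Fin 16 → ZMod 2)) (h0 : (0 : Fin 16 → ZMod 2) ∈ C)
    (hreg : IsCompletelyRegular C) (hd : IsMinDist C 6) :
    (∀ T : Finset (Fin 16), T.card = 3 →
      {β ∈ C | hammingNorm β = 6 ∧ ∀ i ∈ T, β i ≠ 0}.ncard = 4) ∧
    {β ∈ C | hammingNorm β = 6}.ncard = 112 := by
  have key := fam_main (F := famF C) ((mem_fam _ _).2 ⟨0, h0, by simp [suppF]⟩) (by
      intro A hA B hB hne
      obtain ⟨x, hx, rfl⟩ := (mem_fam _ _).1 hA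
      obtain ⟨y, hy, rfl⟩ := (mem_fam _ _).1 hB
      rw [← dist_supp]
      exact hd.1 x hx y hy (fun e => hne (by rw [e]))) (by
      obtain ⟨x, hx, y, hy, -, h⟩ := hd.2
      exact ⟨_, (mem_fam _ _).2 ⟨x, hx, rfl⟩, _, (mem_fam _ _).2 ⟨y, hy, rfl⟩, by
        rw [← dist_supp, h]⟩) (by
      intro X Y d hX hY k
      have h := hreg (indF X) (indF Y) ((dist_atD C X d hX).trans (dist_atD C Y d hY).symm) k
      rw [ncard_fam C _ (fun A => (symmDiff X A).card = k)
          (fun x => by rw [dist_supp, supp_ind]),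
        ncard_fam C _ (fun A => (symmDiff Y A).card = k)
          (fun x => by rw [dist_supp, supp_ind])] at h
      exact h)
  refine ⟨fun T hT => ?_, ?_⟩
  · rw [← key.1 T hT]
    refine ncard_fam C _ _ (fun x => ?_)
    rw [norm_supp]
    simp [suppF, Finset.subset_iff]
  · rw [← key.2]
    refine ncard_fam C _ _ (fun x => ?_)
    rw [norm_supp]
    simp
end

section
/- Let C be a binary code of length m with minimum distance δ ≥ 1, set t = ⌊δ/2⌋, fix a t-element subset T of the m coordinates, and let S be the set of codewords of weight δ whose support contains T. Then: (i) for any two distinct codewords α, β ∈ S, supp(α) ∩ supp(β) = T; and (ii) (δ − t)·|S| ≤ m − t, so |S| ≤ (m − t)/(δ − t). -/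
open Set

lemma supp_card_aux {m : ℕ} (α β : Fin m → ZMod 2) :
    2 * (Finset.univ.filter (fun i => α i ≠ 0) ∩ Finset.univ.filter (fun i => β i ≠ 0)).card
      + hammingDist α β = hammingNorm α + hammingNorm β := by
  have key : ∀ a b : ZMod 2, 2 * (if a ≠ 0 ∧ b ≠ 0 then 1 else 0) + (if a ≠ b then 1 else 0)
      = (if a ≠ 0 then 1 else 0) + (if b ≠ 0 then 1 else 0) := by decide
  unfold hammingDist hammingNorm
  rw [← Finset.filter_and]
  simp only [Finset.card_filter]
  rw [Finset.mul_sum, ← Finset.sum_add_distrib, ← Finset.sum_add_distrib]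
  exact Finset.sum_congr rfl fun i _ => key (α i) (β i)

/-- For a binary code of minimum distance `δ ≥ 1` and a `⌊δ/2⌋`-subset `T` of the
coordinates, the weight-`δ` codewords whose support contains `T` pairwise intersect
exactly in `T`, and there are at most `(m - t)/(δ - t)` of them, `t = ⌊δ/2⌋`. -/
theorem stmt_16 {m δ : ℕ} (C : Set (Fin m → ZMod 2)) (hd : IsMinDist C δ)
    (hδ : 1 ≤ δ) (T : Finset (Fin m)) (hT : T.card = δ / 2) :
    (∀ α ∈ {α ∈ C | hammingNorm α = δ ∧ ∀ i ∈ T, α i ≠ 0},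
      ∀ β ∈ {α ∈ C | hammingNorm α = δ ∧ ∀ i ∈ T, α i ≠ 0}, α ≠ β →
        {i : Fin m | α i ≠ 0} ∩ {i : Fin m | β i ≠ 0} = (T : Set (Fin m))) ∧
    (δ - δ / 2) * {α ∈ C | hammingNorm α = δ ∧ ∀ i ∈ T, α i ≠ 0}.ncard ≤ m - δ / 2 ∧
    {α ∈ C | hammingNorm α = δ ∧ ∀ i ∈ T, α i ≠ 0}.ncard ≤ (m - δ / 2) / (δ - δ / 2) := by
  classical
  have h1 : ∀ α ∈ {α ∈ C | hammingNorm α = δ ∧ ∀ i ∈ T, α i ≠ 0},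
      ∀ β ∈ {α ∈ C | hammingNorm α = δ ∧ ∀ i ∈ T, α i ≠ 0}, α ≠ β →
        Finset.univ.filter (fun i => α i ≠ 0) ∩ Finset.univ.filter (fun i => β i ≠ 0) = T := by
    rintro α ⟨hα, hα1, hα2⟩ β ⟨hβ, hβ1, hβ2⟩ hne
    have h := supp_card_aux α β
    have h' := hd.1 α hα β hβ hne
    symm
    apply Finset.eq_of_subset_of_card_le
    · intro i hi
      simp [hα2 i hi, hβ2 i hi]
    · omega
  have h2 : (δ - δ / 2) * {α ∈ C | hammingNorm α = δ ∧ ∀ i ∈ T, α i ≠ 0}.ncard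
      ≤ m - δ / 2 := by
    generalize hS : {α ∈ C | hammingNorm α = δ ∧ ∀ i ∈ T, α i ≠ 0} = S at h1
    have hfin : S.Finite := Set.toFinite S
    rw [Set.ncard_eq_toFinset_card S hfin]
    have hdisj : ((hfin.toFinset : Finset (Fin m → ZMod 2)) : Set (Fin m → ZMod 2)).PairwiseDisjoint
        (fun α => Finset.univ.filter (fun i => α i ≠ 0) \ T) := by
      intro α hα β hβ hne
      have h := h1 α (by simpa using hα) β (by simpa using hβ) hne
      rw [Function.onFun, Finset.disjoint_left]
      intro i hi hj
      rw [Finset.mem_sdiff] at hi hj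
      exact hi.2 (h ▸ Finset.mem_inter.2 ⟨hi.1, hj.1⟩)
    have hc : ∀ α ∈ hfin.toFinset,
        (Finset.univ.filter (fun i => α i ≠ 0) \ T).card = δ - δ / 2 := by
      intro α hα
      have hα' : α ∈ S := by simpa using hα
      rw [← hS] at hα'
      obtain ⟨_, hw, hs⟩ := hα'
      rw [Finset.card_sdiff_of_subset (fun i hi => by simp [hs i hi]), hT]
      rw [← hw]
      rfl
    have hb := Finset.card_biUnion hdisj
    rw [Finset.sum_congr rfl hc, Finset.sum_const, smul_eq_mul, mul_comm] at hb
    rw [← hb, ← hT]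
    have hsub : hfin.toFinset.biUnion (fun α => Finset.univ.filter (fun i => α i ≠ 0) \ T) ⊆ Tᶜ := by
      intro i hi
      simp only [Finset.mem_biUnion, Finset.mem_sdiff] at hi
      obtain ⟨_, _, _, h⟩ := hi
      simpa using h
    have := Finset.card_le_card hsub
    rwa [Finset.card_compl, Fintype.card_fin] at this
  refine ⟨?_, h2, ?_⟩
  · intro α hα β hβ hne
    rw [← h1 α hα β hβ hne]
    ext i
    simp
  · rw [Nat.le_div_iff_mul_le (by omega), mul_comm]
    exact h2
end
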